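/- arXiv:1705.08316 — 2 statements merged into one kernel-verified Lean document; each statement's English description precedes it below -/
import Mathlib

section
/- Let G be a connected simple graph on n ≥ 3 vertices. Then cfc(G) = n − 2 if and only if either G is a tree with maximum degree Δ(G) = n − 2 (necessarily n ≥ 4), or G is isomorphic to one of the following graphs: K_3; K_{1,3}+e (the star K_{1,3} with an added edge joining two leaves, i.e., a triangle with a pendant edge); K_{2,2} (the 4-cycle C_4); K_{2,2}+e (the 4-cycle with an added chord, i.e., K_4 minus an edge); or the path P_5 on 5 vertices. -/
open SimpleGraph

/-- An edge-coloring `c` makes `G` conflict-free connected: every pair of distinct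
vertices is joined by a path on which some color appears on exactly one edge. -/
def IsCFCColoring {V : Type*} (G : SimpleGraph V) (c : Sym2 V → ℕ) : Prop :=
  ∀ u v : V, u ≠ v → ∃ p : G.Path u v, ∃ e ∈ (p.1).edges,
    ∀ e' ∈ (p.1).edges, c e' = c e → e' = e

/-- The conflict-free connection number of `G`: the least `k` such that some
edge-coloring of `G` with colors from `{0, …, k-1}` makes `G` conflict-free connected. -/
noncomputable def cfcNum {V : Type*} (G : SimpleGraph V) : ℕ :=
  sInf {k | ∃ c : Sym2 V → ℕ, (∀ e ∈ G.edgeSet, c e < k) ∧ IsCFCColoring G c}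

/-- K_{1,3}+e : the star K_{1,3} with an added edge joining two leaves
(a triangle with a pendant edge), on vertex set Fin 4 with center 0. -/
def starK13PlusEdge : SimpleGraph (Fin 4) :=
  SimpleGraph.fromEdgeSet {s(0, 1), s(0, 2), s(0, 3), s(1, 2)}

/-- K_{2,2}, i.e. the 4-cycle C_4. -/
def cycle4 : SimpleGraph (Fin 4) :=
  SimpleGraph.fromEdgeSet {s(0, 1), s(1, 2), s(2, 3), s(3, 0)}

/-- K_{2,2}+e : the 4-cycle with an added chord, i.e. K_4 minus an edge. -/
def cycle4PlusChord : SimpleGraph (Fin 4) :=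
  SimpleGraph.fromEdgeSet {s(0, 1), s(1, 2), s(2, 3), s(3, 0), s(0, 2)}

/-!
*Upper bounds.* If disjoint vertex sets `S` and `T`, joined by an edge, each admit a conflict-free
coloring with `k` colors, then `S ∪ T` admits one with `k + 1`: give the new color to all edges
between `S` and `T`, and let crossing paths use exactly one of them. Adding vertices one at a time
shows that a set of `m` vertices colorable with `k` colors gives `cfc(G) ≤ n - m + k`. A path on
four vertices thus yields `cfc(G) ≤ n - 2`, while two adjacent disjoint paths on three vertices, a
spider with two legs of length two, or a 2-colored configuration on five vertices yields
`cfc(G) ≤ n - 3`. For `n ≥ 5` every connected graph with a cycle contains one of the latter, and so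
does every tree other than `P₅` with maximum degree below `n - 2`.

*Lower bounds.* In a tree paths are unique, so edges at a common vertex get distinct colors and
`Δ ≤ cfc`. Removing the uniquely colored edge of a path leaves two paths that avoid its color, so a
path with `k` colors has fewer than `2 ^ k` edges; this gives `cfc(P₅) ≥ 3`.
-/

section ConflictFree

variable {V W : Type*} {G : SimpleGraph V} {H : SimpleGraph W} {u v : V} {c : Sym2 V → ℕ}

/-- Some color appears on exactly one edge of `p`. The multiplicity of edges is not counted,
so this is the notion of conflict-freeness for trails, in particular for paths. -/
def IsConflictFree (c : Sym2 V → ℕ) (p : G.Walk u v) : Prop :=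
  ∃ e ∈ p.edges, ∀ e' ∈ p.edges, c e' = c e → e' = e

theorem IsConflictFree.reverse {p : G.Walk u v} (hp : IsConflictFree c p) :
    IsConflictFree c p.reverse := by
  simpa only [IsConflictFree, Walk.edges_reverse, List.mem_reverse] using hp

theorem IsConflictFree.congr {c' : Sym2 V → ℕ} {p : G.Walk u v} (hp : IsConflictFree c p)
    (h : ∀ e ∈ p.edges, c' e = c e) : IsConflictFree c' p := by
  obtain ⟨e, he, huniq⟩ := hp
  exact ⟨e, he, fun e' he' heq => huniq e' he' (by rw [← h e' he', heq, h e he])⟩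

theorem IsConflictFree.map {c' : Sym2 W → ℕ} {p : G.Walk u v} (hp : IsConflictFree c p)
    (f : G →g H) (h : ∀ e, c' (e.map f) = c e) : IsConflictFree c' (p.map f) := by
  obtain ⟨e, he, huniq⟩ := hp
  refine ⟨e.map f, by simpa only [Walk.edges_map] using List.mem_map_of_mem he, ?_⟩
  simp only [Walk.edges_map, List.forall_mem_map, h]
  exact fun e' he' heq => congrArg (Sym2.map f) (huniq e' he' heq)

theorem isConflictFree_append_cons {a b : V} {p : G.Walk u a} {q : G.Walk b v} (h : G.Adj a b)
    (hp : ∀ e ∈ p.edges, c e ≠ c s(a, b)) (hq : ∀ e ∈ q.edges, c e ≠ c s(a, b)) :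
    IsConflictFree c (p.append (.cons h q)) := by
  refine ⟨s(a, b), by simp, fun e he heq => ?_⟩
  simp only [Walk.edges_append, Walk.edges_cons, List.mem_append, List.mem_cons] at he
  rcases he with he | rfl | he
  exacts [(hp e he heq).elim, rfl, (hq e he heq).elim]

theorem isPath_append_cons {a b : V} {p : G.Walk u a} {q : G.Walk b v} (h : G.Adj a b)
    (hp : p.IsPath) (hq : q.IsPath) (hpq : p.support.Disjoint q.support) :
    (p.append (.cons h q)).IsPath := by
  rw [Walk.isPath_def, Walk.support_append, Walk.support_cons, List.tail_cons]
  exact hp.support_nodup.append hq.support_nodup hpq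

end ConflictFree

section CFCColorableOn

variable {V : Type*} {G : SimpleGraph V}

/-- `G` has an edge-coloring with colors `0, …, k - 1` for which any two distinct vertices of `S`
are joined by a conflict-free path that stays inside `S`. All of `Sym2 V` is colored, so that
colorings of different vertex sets can be glued. -/
def CFCColorableOn (G : SimpleGraph V) (S : Finset V) (k : ℕ) : Prop :=
  ∃ c : Sym2 V → ℕ, (∀ e, c e < k) ∧ ∀ u ∈ S, ∀ v ∈ S, u ≠ v →
    ∃ p : G.Walk u v, p.IsPath ∧ (∀ x ∈ p.support, x ∈ S) ∧ IsConflictFree c p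

theorem IsCFCColoring.cfcColorableOn_univ [Fintype V] {c : Sym2 V → ℕ} {k : ℕ}
    (hc : IsCFCColoring G c) (hk : ∀ e, c e < k) : CFCColorableOn G Finset.univ k := by
  refine ⟨c, hk, fun u _ v _ huv => ?_⟩
  obtain ⟨p, hp⟩ := hc u v huv
  exact ⟨p, p.2, fun x _ => Finset.mem_univ x, hp⟩

theorem CFCColorableOn.exists_isCFCColoring [Fintype V] {k : ℕ}
    (h : CFCColorableOn G Finset.univ k) :
    ∃ c : Sym2 V → ℕ, (∀ e ∈ G.edgeSet, c e < k) ∧ IsCFCColoring G c := by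
  obtain ⟨c, hk, hc⟩ := h
  refine ⟨c, fun e _ => hk e, fun u v huv => ?_⟩
  obtain ⟨p, hp, -, hcf⟩ := hc u (Finset.mem_univ u) v (Finset.mem_univ v) huv
  exact ⟨⟨p, hp⟩, hcf⟩

theorem CFCColorableOn.cfcNum_le [Fintype V] {k : ℕ} (h : CFCColorableOn G Finset.univ k) :
    cfcNum G ≤ k :=
  Nat.sInf_le h.exists_isCFCColoring

theorem CFCColorableOn.mono {S : Finset V} {k l : ℕ} (h : CFCColorableOn G S k) (hkl : k ≤ l) :
    CFCColorableOn G S l :=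
  let ⟨c, hk, hc⟩ := h
  ⟨c, fun e => (hk e).trans_le hkl, hc⟩

theorem CFCColorableOn.exists_isPath {S : Finset V} {k : ℕ} (h : CFCColorableOn G S k) {u v : V}
    (hu : u ∈ S) (hv : v ∈ S) : ∃ p : G.Walk u v, p.IsPath ∧ ∀ x ∈ p.support, x ∈ S := by
  obtain ⟨c, -, hc⟩ := h
  obtain rfl | huv := eq_or_ne u v
  · exact ⟨.nil, .nil, by simpa using hu⟩
  · obtain ⟨p, hp, hpS, -⟩ := hc u hu v hv huv
    exact ⟨p, hp, hpS⟩

theorem cfcColorableOn_of_isClique {S : Finset V} (hS : G.IsClique S) : CFCColorableOn G S 1 := by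
  refine ⟨fun _ => 0, fun _ => one_pos, fun u hu v hv huv => ?_⟩
  refine ⟨(hS hu hv huv).toWalk, Walk.IsPath.of_adj _, ?_, s(u, v), by simp, by simp⟩
  simp [hu, hv]

theorem CFCColorableOn.map {W : Type*} {H : SimpleGraph W} [Nonempty V] {S : Finset V} {k : ℕ}
    (h : CFCColorableOn G S k) (f : G.Copy H) : CFCColorableOn H (S.map f.toEmbedding) k := by
  obtain ⟨c, hk, hc⟩ := h
  have hf : (Sym2.map f).Injective := Sym2.map.injective f.injective
  let e₀ : Sym2 V := s(Classical.arbitrary V, Classical.arbitrary V)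
  refine ⟨Function.extend (Sym2.map f) c fun _ => c e₀, fun e => ?_, ?_⟩
  · by_cases he : ∃ e', Sym2.map f e' = e
    · obtain ⟨e', rfl⟩ := he
      exact (hf.extend_apply c _ e').symm ▸ hk e'
    · exact (Function.extend_apply' c _ e he).symm ▸ hk e₀
  · simp only [Finset.forall_mem_map]
    intro u hu v hv huv
    obtain ⟨p, hp, hpS, hcf⟩ := hc u hu v hv fun h => huv (h ▸ rfl)
    refine ⟨p.map f.toHom, hp.map f.injective, fun x hx => ?_, hcf.map _ fun e => ?_⟩
    · obtain ⟨y, hy, rfl⟩ := List.mem_map.1 (p.support_map f.toHom ▸ hx)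
      exact Finset.mem_map_of_mem f.toEmbedding (hpS y hy)
    · exact hf.extend_apply c _ e

section Join

variable {S T : Finset V} {a b : V} {k : ℕ}

theorem mem_sym2_of_mem_edges {u v : V} {p : G.Walk u v} (hp : ∀ x ∈ p.support, x ∈ S)
    {e : Sym2 V} (he : e ∈ p.edges) : e ∈ S.sym2 :=
  Finset.mem_sym2_iff.2 fun _ hx => hp _ (p.mem_support_of_mem_edges he hx)

theorem exists_glued_coloring (hST : Disjoint S T) (c₁ c₂ c₃ : Sym2 V → ℕ) :
    ∃ c : Sym2 V → ℕ, (∀ e ∈ S.sym2, c e = c₁ e) ∧ (∀ e ∈ T.sym2, c e = c₂ e) ∧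
      ∀ e, e ∉ S.sym2 → e ∉ T.sym2 → c e = c₃ e := by
  classical
  refine ⟨fun e => if e ∈ S.sym2 then c₁ e else if e ∈ T.sym2 then c₂ e else c₃ e,
    fun e he => if_pos he, fun e he => ?_, fun e heS heT => (if_neg heS).trans (if_neg heT)⟩
  refine (if_neg fun heS => ?_).trans (if_pos he)
  exact Finset.disjoint_left.1 hST (Finset.mem_sym2_iff.1 heS _ e.out_fst_mem)
    (Finset.mem_sym2_iff.1 he _ e.out_fst_mem)

variable [DecidableEq V]

theorem exists_isConflictFree_of_adj {c : Sym2 V → ℕ} (hST : Disjoint S T) (hab : G.Adj a b)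
    (hcS : ∀ e ∈ S.sym2, c e ≠ c s(a, b)) (hcT : ∀ e ∈ T.sym2, c e ≠ c s(a, b)) {u v : V}
    (hS : ∃ p : G.Walk u a, p.IsPath ∧ ∀ x ∈ p.support, x ∈ S)
    (hT : ∃ q : G.Walk b v, q.IsPath ∧ ∀ x ∈ q.support, x ∈ T) :
    ∃ p : G.Walk u v, p.IsPath ∧ (∀ x ∈ p.support, x ∈ S ∪ T) ∧ IsConflictFree c p := by
  obtain ⟨p, hp, hpS⟩ := hS
  obtain ⟨q, hq, hqT⟩ := hT
  refine ⟨p.append (.cons hab q), isPath_append_cons hab hp hq fun x hxp hxq =>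
    Finset.disjoint_left.1 hST (hpS x hxp) (hqT x hxq), fun x hx => ?_,
    isConflictFree_append_cons hab (fun e he => hcS e (mem_sym2_of_mem_edges hpS he))
      fun e he => hcT e (mem_sym2_of_mem_edges hqT he)⟩
  rw [Walk.support_append, Walk.support_cons, List.tail_cons, List.mem_append] at hx
  exact Finset.mem_union.2 (hx.imp (hpS x) (hqT x))

theorem CFCColorableOn.join (hS : CFCColorableOn G S k) (hT : CFCColorableOn G T k)
    (hST : Disjoint S T) (ha : a ∈ S) (hb : b ∈ T) (hab : G.Adj a b) :
    CFCColorableOn G (S ∪ T) (k + 1) := by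
  obtain ⟨c₁, hk₁, hc₁⟩ := id hS
  obtain ⟨c₂, hk₂, hc₂⟩ := id hT
  obtain ⟨c, hcS, hcT, hck⟩ := exists_glued_coloring hST c₁ c₂ fun _ => k
  have hcab : c s(a, b) = k := hck _
    (fun h => Finset.disjoint_right.1 hST hb (Finset.mk_mem_sym2_iff.1 h).2)
    (fun h => Finset.disjoint_left.1 hST ha (Finset.mk_mem_sym2_iff.1 h).1)
  have hcross : ∀ u ∈ S, ∀ v ∈ T, ∃ p : G.Walk u v,
      p.IsPath ∧ (∀ x ∈ p.support, x ∈ S ∪ T) ∧ IsConflictFree c p := fun u hu v hv =>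
    exists_isConflictFree_of_adj hST hab (fun e he => hcab ▸ hcS e he ▸ (hk₁ e).ne)
      (fun e he => hcab ▸ hcT e he ▸ (hk₂ e).ne) (hS.exists_isPath hu ha) (hT.exists_isPath hb hv)
  refine ⟨c, fun e => ?_, fun u hu v hv huv => ?_⟩
  · by_cases heS : e ∈ S.sym2
    · exact hcS e heS ▸ (hk₁ e).trans k.lt_succ_self
    by_cases heT : e ∈ T.sym2
    · exact hcT e heT ▸ (hk₂ e).trans k.lt_succ_self
    · exact hck e heS heT ▸ k.lt_succ_self
  rcases Finset.mem_union.1 hu with hu | hu <;> rcases Finset.mem_union.1 hv with hv | hv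
  · obtain ⟨p, hp, hpS, hcf⟩ := hc₁ u hu v hv huv
    exact ⟨p, hp, fun x hx => Finset.mem_union_left _ (hpS x hx),
      hcf.congr fun e he => hcS e (mem_sym2_of_mem_edges hpS he)⟩
  · exact hcross u hu v hv
  · obtain ⟨p, hp, hpS, hcf⟩ := hcross v hv u hu
    exact ⟨p.reverse, hp.reverse, by simpa using hpS, hcf.reverse⟩
  · obtain ⟨p, hp, hpT, hcf⟩ := hc₂ u hu v hv huv
    exact ⟨p, hp, fun x hx => Finset.mem_union_right _ (hpT x hx),
      hcf.congr fun e he => hcT e (mem_sym2_of_mem_edges hpT he)⟩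

theorem cfcColorableOn_pair (hab : G.Adj a b) : CFCColorableOn G {a, b} 1 :=
  cfcColorableOn_of_isClique (by simpa [SimpleGraph.isClique_pair] using fun _ => hab)

theorem CFCColorableOn.insert (hS : CFCColorableOn G S k) (ha : a ∈ S) (hb : b ∉ S)
    (hab : G.Adj a b) : CFCColorableOn G (insert b S) (k + 1) := by
  have hk : 1 ≤ k := let ⟨_, hc, _⟩ := hS; Nat.one_le_of_lt (hc s(a, a))
  have hT : CFCColorableOn G {b} 1 := cfcColorableOn_of_isClique (by simp)
  rw [Finset.insert_eq, Finset.union_comm]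
  exact hS.join (hT.mono hk) (Finset.disjoint_singleton_right.2 hb) ha (by simp) hab

end Join

theorem exists_adj_mem_notMem [Fintype V] (hG : G.Connected) {S : Finset V} (hne : S.Nonempty)
    (hlt : S.card < Fintype.card V) : ∃ a ∈ S, ∃ b ∉ S, G.Adj a b := by
  obtain ⟨u, hu⟩ := hne
  obtain ⟨v, -, hv⟩ := Finset.exists_mem_notMem_of_card_lt_card (Finset.card_univ (α := V) ▸ hlt)
  obtain ⟨p⟩ := hG.preconnected u v
  obtain ⟨d, -, hdS, hdS'⟩ := p.exists_boundary_dart S hu hv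
  exact ⟨d.fst, hdS, d.snd, hdS', d.adj⟩

theorem CFCColorableOn.extend [Fintype V] (hG : G.Connected) {S : Finset V} {k : ℕ}
    (hS : CFCColorableOn G S k) (hne : S.Nonempty) :
    CFCColorableOn G Finset.univ (k + (Fintype.card V - S.card)) := by
  classical
  induction h : Fintype.card V - S.card generalizing S k with
  | zero =>
    rwa [← Finset.eq_univ_of_card S (le_antisymm S.card_le_univ (Nat.sub_eq_zero_iff_le.1 h))]
  | succ m ih =>
    obtain ⟨a, ha, b, hb, hab⟩ := exists_adj_mem_notMem hG hne (by omega)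
    have := ih (hS.insert ha hb hab) (Finset.insert_nonempty _ _) (by
      rw [Finset.card_insert_of_notMem hb]; omega)
    rwa [add_right_comm] at this

theorem CFCColorableOn.cfcNum_add_card_le [Fintype V] (hG : G.Connected) {S : Finset V} {k : ℕ}
    (hS : CFCColorableOn G S k) (hne : S.Nonempty) : cfcNum G + S.card ≤ Fintype.card V + k := by
  have := (hS.extend hG hne).cfcNum_le
  have := S.card_le_univ
  omega

theorem cfcNum_add_card_add_card_le [Fintype V] (hG : G.Connected) {S T : Finset V} {a b : V}
    {k : ℕ} (hS : CFCColorableOn G S k) (hT : CFCColorableOn G T k) (hST : Disjoint S T)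
    (ha : a ∈ S) (hb : b ∈ T) (hab : G.Adj a b) :
    cfcNum G + S.card + T.card ≤ Fintype.card V + k + 1 := by
  classical
  have := (hS.join hT hST ha hb hab).cfcNum_add_card_le hG ⟨a, Finset.mem_union_left _ ha⟩
  rw [Finset.card_union_of_disjoint hST] at this
  omega

theorem IsCFCColoring.cfcNum_add_card_le {W : Type*} {H : SimpleGraph W} [Fintype V] [Fintype W]
    [Nonempty W] {c : Sym2 W → ℕ} {k : ℕ} (hc : IsCFCColoring H c) (hk : ∀ e, c e < k)
    (hG : G.Connected) (hHG : H ⊑ G) : cfcNum G + Fintype.card W ≤ Fintype.card V + k := by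
  obtain ⟨f⟩ := hHG
  have := ((hc.cfcColorableOn_univ hk).map f).cfcNum_add_card_le hG (by simp)
  rwa [Finset.card_map, Finset.card_univ] at this

theorem exists_isCFCColoring_lt_cfcNum [Finite V] (hG : G.Connected) :
    ∃ c : Sym2 V → ℕ, (∀ e ∈ G.edgeSet, c e < cfcNum G) ∧ IsCFCColoring G c := by
  have := Fintype.ofFinite V
  obtain ⟨u⟩ := hG.nonempty
  have hu : CFCColorableOn G {u} 1 := cfcColorableOn_of_isClique (by simp)
  exact Nat.sInf_mem
    (s := {k | ∃ c : Sym2 V → ℕ, (∀ e ∈ G.edgeSet, c e < k) ∧ IsCFCColoring G c})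
    ⟨_, (hu.extend hG (Finset.singleton_nonempty u)).exists_isCFCColoring⟩

end CFCColorableOn

section LowerBounds

variable {V : Type*} {G : SimpleGraph V} {c : Sym2 V → ℕ}

theorem exists_eq_append_cons_of_mem_edges {u v : V} {p : G.Walk u v} {e : Sym2 V}
    (he : e ∈ p.edges) : ∃ x y, ∃ (q : G.Walk u x) (hxy : G.Adj x y) (r : G.Walk y v),
      s(x, y) = e ∧ p = q.append (.cons hxy r) := by
  induction p with
  | nil => simp at he
  | cons h p ih =>
    rcases List.mem_cons.1 (Walk.edges_cons h p ▸ he) with rfl | he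
    · exact ⟨_, _, .nil, h, p, rfl, rfl⟩
    · obtain ⟨x, y, q, hxy, r, hexy, rfl⟩ := ih he
      exact ⟨x, y, .cons h q, hxy, r, hexy, rfl⟩

theorem IsCFCColoring.isConflictFree (hc : IsCFCColoring G c) (hG : G.IsAcyclic) {u v : V}
    {p : G.Walk u v} (hp : p.IsPath) (huv : u ≠ v) : IsConflictFree c p := by
  obtain ⟨q, hq⟩ := hc u v huv
  have := hG.subsingleton_path u v
  rwa [Subsingleton.elim q ⟨p, hp⟩] at hq

theorem IsCFCColoring.length_lt_two_pow (hc : IsCFCColoring G c) (hG : G.IsAcyclic)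
    {C : Finset ℕ} {u v : V} {p : G.Walk u v} (hp : p.IsPath) (hC : ∀ e ∈ p.edges, c e ∈ C) :
    p.length < 2 ^ C.card := by
  induction h : C.card generalizing C u v with
  | zero =>
    have : p.edges = [] := List.eq_nil_iff_forall_not_mem.2 fun e he => by
      simpa [Finset.card_eq_zero.1 h] using hC e he
    simp [← p.length_edges, this]
  | succ k ih =>
    obtain rfl | huv := eq_or_ne u v
    · simp [(Walk.isPath_iff_nil.1 hp).length_eq_zero]
    obtain ⟨e, he, huniq⟩ := hc.isConflictFree hG hp huv
    obtain ⟨x, y, q, hxy, r, rfl, rfl⟩ := exists_eq_append_cons_of_mem_edges he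
    have hnodup := hp.isTrail.edges_nodup
    simp only [Walk.edges_append, Walk.edges_cons, List.nodup_append, List.nodup_cons,
      List.mem_append, List.mem_cons] at hnodup huniq hC
    have hcard : (C.erase (c s(x, y))).card = k := by
      rw [Finset.card_erase_of_mem (hC _ (.inr (.inl rfl))), h, Nat.add_sub_cancel]
    have hq := ih hp.of_append_left (fun e he => Finset.mem_erase.2
      ⟨fun hce => hnodup.2.2 e he _ (.inl rfl) (huniq e (.inl he) hce), hC e (.inl he)⟩) hcard
    have hr := ih hp.of_append_right.of_cons (fun e he => Finset.mem_erase.2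
      ⟨fun hce => hnodup.2.1.1 (huniq e (.inr (.inr he)) hce ▸ he), hC e (.inr (.inr he))⟩) hcard
    rw [Walk.length_append, Walk.length_cons, pow_succ]
    omega

theorem length_lt_two_pow_cfcNum [Finite V] (hT : G.IsTree) {u v : V} {p : G.Walk u v}
    (hp : p.IsPath) : p.length < 2 ^ cfcNum G := by
  obtain ⟨c, hk, hc⟩ := exists_isCFCColoring_lt_cfcNum hT.connected
  rw [← Finset.card_range (cfcNum G)]
  exact hc.length_lt_two_pow hT.isAcyclic hp fun e he =>
    Finset.mem_range.2 (hk e (p.edges_subset_edgeSet he))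

theorem IsCFCColoring.ne_of_adj_adj (hc : IsCFCColoring G c) (hG : G.IsAcyclic) {u v w : V}
    (hu : G.Adj v u) (hw : G.Adj v w) (huw : u ≠ w) : c s(v, u) ≠ c s(v, w) := by
  intro heq
  have hp : (Walk.cons hu.symm (.cons hw .nil)).IsPath := by
    simp [Walk.cons_isPath_iff, hu.ne', hw.ne, huw]
  have := hc.length_lt_two_pow hG hp (C := {c s(v, w)}) (by simp [Sym2.eq_swap ▸ heq])
  simp at this

theorem maxDegree_le_cfcNum [Fintype V] [DecidableRel G.Adj] (hT : G.IsTree) :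
    G.maxDegree ≤ cfcNum G := by
  obtain ⟨c, hk, hc⟩ := exists_isCFCColoring_lt_cfcNum hT.connected
  refine G.maxDegree_le_of_forall_degree_le _ fun v => ?_
  rw [← Finset.card_range (cfcNum G), ← G.card_neighborFinset_eq_degree]
  refine Finset.card_le_card_of_injOn (fun w => c s(v, w)) (fun w hw => ?_) fun u hu w hw h => ?_
  · simpa using hk s(v, w) (by simpa using hw)
  · by_contra huw
    exact hc.ne_of_adj_adj hT.isAcyclic (by simpa using hu) (by simpa using hw) huw h

theorem cfcNum_pos [Finite V] [Nontrivial V] (hG : G.Connected) : 0 < cfcNum G := by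
  obtain ⟨c, hk, hc⟩ := exists_isCFCColoring_lt_cfcNum hG
  obtain ⟨u, v, huv⟩ := exists_pair_ne V
  obtain ⟨p, e, he, -⟩ := hc u v huv
  exact Nat.zero_lt_of_lt (hk e (p.1.edges_subset_edgeSet he))

theorem cfcNum_le_one_iff [Finite V] (hG : G.Connected) : cfcNum G ≤ 1 ↔ G = ⊤ := by
  have := Fintype.ofFinite V
  refine ⟨fun h => eq_top_iff.2 fun u v huv => ?_, ?_⟩
  · obtain ⟨c, hk, hc⟩ := exists_isCFCColoring_lt_cfcNum hG
    have hk0 {e} (he : e ∈ G.edgeSet) : c e = 0 := Nat.lt_one_iff.1 ((hk e he).trans_le h)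
    obtain ⟨p, e, he, huniq⟩ := hc u v huv
    have hsub : ∀ e' ∈ p.1.edges, e' = e := fun e' he' => huniq e' he' <|
      (hk0 (p.1.edges_subset_edgeSet he')).trans (hk0 (p.1.edges_subset_edgeSet he)).symm
    have hlen : p.1.length ≤ 1 := by
      have hnodup := p.2.isTrail.edges_nodup
      rwa [List.eq_replicate_of_mem hsub, List.nodup_replicate, Walk.length_edges] at hnodup
    have hlen' : p.1.length ≠ 0 := fun h0 => huv (Walk.eq_of_length_eq_zero h0)
    exact p.1.adj_of_length_eq_one (by omega)
  · rintro rfl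
    exact (cfcColorableOn_of_isClique (.top _)).cfcNum_le

end LowerBounds

section Certificates

theorem isCFCColoring_iff_finsetWalkLength {V : Type*} [Fintype V] [DecidableEq V]
    (G : SimpleGraph V) [DecidableRel G.Adj] (c : Sym2 V → ℕ) : IsCFCColoring G c ↔
      ∀ u v, u ≠ v → ∃ l ∈ List.range (Fintype.card V), ∃ p ∈ G.finsetWalkLength l u v,
        p.support.Nodup ∧ ∃ e ∈ p.edges, ∀ e' ∈ p.edges, c e' = c e → e' = e := by
  refine forall₃_congr fun u v _ => ⟨fun ⟨p, hp⟩ => ?_, fun ⟨_, _, p, _, hnodup, hp⟩ => ?_⟩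
  · exact ⟨p.1.length, List.mem_range.2 p.2.length_lt, p.1, mem_finsetWalkLength_iff.2 rfl,
      p.2.support_nodup, hp⟩
  · exact ⟨⟨p, .mk' hnodup⟩, hp⟩

/-- Mathlib's enumeration of paths does not reduce in the kernel, whereas `finsetWalkLength`
does. -/
instance {V : Type*} [Fintype V] [DecidableEq V] (G : SimpleGraph V) [DecidableRel G.Adj]
    (c : Sym2 V → ℕ) : Decidable (IsCFCColoring G c) :=
  decidable_of_iff' _ (isCFCColoring_iff_finsetWalkLength G c)

/-- A triangle with pendant edges at two of its vertices, one of the five-vertex graphs with a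
conflict-free 2-coloring. -/
def bull : SimpleGraph (Fin 5) := fromEdgeSet {s(0, 1), s(0, 2), s(1, 2), s(0, 3), s(1, 4)}

/-- A triangle with two pendant edges at the same vertex, again conflict-free 2-colorable. -/
def cricket : SimpleGraph (Fin 5) := fromEdgeSet {s(0, 1), s(0, 2), s(1, 2), s(0, 3), s(0, 4)}

/-- A 4-cycle with a pendant edge, again conflict-free 2-colorable. -/
def banner : SimpleGraph (Fin 5) := fromEdgeSet {s(0, 1), s(1, 2), s(2, 3), s(3, 0), s(0, 4)}

instance : DecidableRel bull.Adj := by unfold bull; infer_instance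
instance : DecidableRel cricket.Adj := by unfold cricket; infer_instance
instance : DecidableRel banner.Adj := by unfold banner; infer_instance

variable {V : Type*} {G : SimpleGraph V} {a b c d e : V}

theorem bull_isContained (hn : [a, b, c, d, e].Nodup) (hab : G.Adj a b) (hac : G.Adj a c)
    (hbc : G.Adj b c) (had : G.Adj a d) (hbe : G.Adj b e) : bull ⊑ G := by
  refine isContained_iff_exists_le_comap.2 ⟨⟨[a, b, c, d, e].get, hn.injective_get⟩, ?_⟩
  simp [bull, Set.insert_subset_iff, *]

theorem cricket_isContained (hn : [a, b, c, d, e].Nodup) (hab : G.Adj a b) (hac : G.Adj a c)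
    (hbc : G.Adj b c) (had : G.Adj a d) (hae : G.Adj a e) : cricket ⊑ G := by
  refine isContained_iff_exists_le_comap.2 ⟨⟨[a, b, c, d, e].get, hn.injective_get⟩, ?_⟩
  simp [cricket, Set.insert_subset_iff, *]

theorem banner_isContained (hn : [a, b, c, d, e].Nodup) (hab : G.Adj a b) (hbc : G.Adj b c)
    (hcd : G.Adj c d) (hda : G.Adj d a) (hae : G.Adj a e) : banner ⊑ G := by
  refine isContained_iff_exists_le_comap.2 ⟨⟨[a, b, c, d, e].get, hn.injective_get⟩, ?_⟩
  simp [banner, Set.insert_subset_iff, *]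

variable [Fintype V]

theorem cfcNum_add_three_le_of_fin_five {H : SimpleGraph (Fin 5)} {p : Sym2 (Fin 5) → Prop}
    [DecidablePred p] (hc : IsCFCColoring H fun e => if p e then 0 else 1) (hG : G.Connected)
    (hHG : H ⊑ G) : cfcNum G + 3 ≤ Fintype.card V := by
  have := hc.cfcNum_add_card_le (k := 2) (fun e => by split_ifs <;> simp) hG hHG
  rw [Fintype.card_fin] at this
  omega

theorem cfcNum_add_three_le_of_bull (hG : G.Connected) (h : bull ⊑ G) :
    cfcNum G + 3 ≤ Fintype.card V := by
  refine cfcNum_add_three_le_of_fin_five (p := (· ∈ [s(0, 3), s(1, 4)])) ?_ hG h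
  decide +kernel

theorem cfcNum_add_three_le_of_cricket (hG : G.Connected) (h : cricket ⊑ G) :
    cfcNum G + 3 ≤ Fintype.card V := by
  refine cfcNum_add_three_le_of_fin_five (p := (· ∈ [s(0, 1), s(1, 2), s(0, 3)])) ?_ hG h
  decide +kernel

theorem cfcNum_add_three_le_of_banner (hG : G.Connected) (h : banner ⊑ G) :
    cfcNum G + 3 ≤ Fintype.card V := by
  refine cfcNum_add_three_le_of_fin_five (p := (· ∈ [s(0, 1), s(0, 4)])) ?_ hG h
  decide +kernel

theorem cfcNum_add_three_le_of_cycleGraph_five (hG : G.Connected) (h : cycleGraph 5 ⊑ G) :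
    cfcNum G + 3 ≤ Fintype.card V := by
  refine cfcNum_add_three_le_of_fin_five (p := (· = s(0, 1))) ?_ hG h
  decide +kernel

end Certificates

section UpperBounds

variable {V : Type*} {G : SimpleGraph V} {a b c d e x y z x' y' z' w : V}

theorem cfcColorableOn_cherry [DecidableEq V] (hxz : x ≠ z) (hxy : G.Adj x y) (hyz : G.Adj y z) :
    CFCColorableOn G {z, y, x} 2 :=
  (cfcColorableOn_pair hxy.symm).insert (by simp) (by simp [hxz.symm, hyz.ne']) hyz

variable [Fintype V]

theorem cfcNum_add_two_le_of_path_four (hG : G.Connected) (hn : [a, b, c, d].Nodup)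
    (hab : G.Adj a b) (hbc : G.Adj b c) (hcd : G.Adj c d) : cfcNum G + 2 ≤ Fintype.card V := by
  classical
  have := cfcNum_add_card_add_card_le hG (cfcColorableOn_pair hab) (cfcColorableOn_pair hcd)
    (by grind [Finset.disjoint_left]) (by simp) (by simp) hbc
  rw [Finset.card_pair hab.ne, Finset.card_pair hcd.ne] at this
  omega

theorem cfcNum_add_three_le_of_cherries (hG : G.Connected) (hn : [x, y, z, x', y', z'].Nodup)
    (hxy : G.Adj x y) (hyz : G.Adj y z) (hxy' : G.Adj x' y') (hyz' : G.Adj y' z')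
    (ha : a ∈ [x, y, z]) (hb : b ∈ [x', y', z']) (hab : G.Adj a b) :
    cfcNum G + 3 ≤ Fintype.card V := by
  classical
  have := cfcNum_add_card_add_card_le hG (cfcColorableOn_cherry (by grind) hxy hyz)
    (cfcColorableOn_cherry (by grind) hxy' hyz') (by grind [Finset.disjoint_left])
    (by grind) (by grind) hab
  rw [Finset.card_eq_three.2 ⟨z, y, x, by grind, by grind, by grind, rfl⟩,
    Finset.card_eq_three.2 ⟨z', y', x', by grind, by grind, by grind, rfl⟩] at this
  omega

theorem cfcNum_add_three_le_of_spider (hG : G.Connected) (hn : [w, c, a, x, b, y].Nodup)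
    (hwc : G.Adj w c) (hwa : G.Adj w a) (hax : G.Adj a x) (hwb : G.Adj w b) (hby : G.Adj b y) :
    cfcNum G + 3 ≤ Fintype.card V := by
  classical
  have hpath : CFCColorableOn G ({c, w} ∪ {b, y}) 2 :=
    (cfcColorableOn_pair hwc.symm).join (cfcColorableOn_pair hby)
      (by grind [Finset.disjoint_left]) (by simp) (by simp) hwb
  have := cfcNum_add_card_add_card_le hG hpath ((cfcColorableOn_pair hax).mono one_le_two)
    (by grind [Finset.disjoint_left]) (by simp) (by simp) hwa
  rw [Finset.card_union_of_disjoint (by grind [Finset.disjoint_left]),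
    Finset.card_pair hwc.ne', Finset.card_pair hby.ne, Finset.card_pair hax.ne] at this
  omega

theorem cfcNum_add_three_le_of_triangle_path (hG : G.Connected) (hn : [a, b, c, d, e].Nodup)
    (hab : G.Adj a b) (hac : G.Adj a c) (hbc : G.Adj b c) (had : G.Adj a d) (hde : G.Adj d e) :
    cfcNum G + 3 ≤ Fintype.card V := by
  classical
  have htri : CFCColorableOn G {a, b, c} 1 := cfcColorableOn_of_isClique
    (is3Clique_triple_iff.2 ⟨hab, hac, hbc⟩).isClique
  have := cfcNum_add_card_add_card_le hG htri (cfcColorableOn_pair hde)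
    (by grind [Finset.disjoint_left]) (by simp) (by simp) had
  rw [Finset.card_eq_three.2 ⟨a, b, c, hab.ne, hac.ne, hbc.ne, rfl⟩,
    Finset.card_pair hde.ne] at this
  omega

theorem cfcNum_add_three_le_of_isPath (hG : G.Connected) {u v : V} {p : G.Walk u v}
    (hp : p.IsPath) (hl : 5 ≤ p.length) : cfcNum G + 3 ≤ Fintype.card V :=
  match p, hl with
  | .cons h₁ (.cons h₂ (.cons h₃ (.cons h₄ (.cons h₅ q)))), _ => by
    refine cfcNum_add_three_le_of_cherries hG ?_ h₁ h₂ h₄ h₅ (by simp) (by simp) h₃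
    have := hp.support_nodup
    have := q.start_mem_support
    grind [Walk.support_cons]

end UpperBounds

section Cycles

variable {V : Type*} {G : SimpleGraph V} {a b c d v : V}

theorem exists_triangle_of_length_eq_three {p : G.Walk v v} (hl : p.length = 3) :
    ∃ a b c, G.Adj a b ∧ G.Adj a c ∧ G.Adj b c :=
  match p, hl with
  | .cons h₁ (.cons h₂ (.cons h₃ .nil)), _ => ⟨_, _, _, h₁, h₃.symm, h₂⟩

theorem exists_four_cycle_of_isCycle {p : G.Walk v v} (hp : p.IsCycle) (hl : p.length = 4) :
    ∃ a b c d, [a, b, c, d].Nodup ∧ G.Adj a b ∧ G.Adj b c ∧ G.Adj c d ∧ G.Adj d a :=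
  match p, hl with
  | .cons h₁ (.cons h₂ (.cons h₃ (.cons h₄ .nil))), _ =>
    ⟨_, _, _, _, hp.support_nodup, h₂, h₃, h₄, h₁⟩

theorem exists_isCycle_of_not_isTree (hG : G.Connected) (hT : ¬ G.IsTree) :
    ∃ v, ∃ p : G.Walk v v, p.IsCycle := by
  by_contra! hcycle
  exact hT ⟨hG, fun v p => hcycle v p⟩

variable [Fintype V]

theorem exists_triangle_pendant_of_length_eq_three (hG : G.Connected) (h4 : 4 ≤ Fintype.card V)
    {p : G.Walk v v} (hl : p.length = 3) :
    ∃ a b c d, [a, b, c, d].Nodup ∧ G.Adj a b ∧ G.Adj a c ∧ G.Adj b c ∧ G.Adj a d := by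
  classical
  obtain ⟨a, b, c, hab, hac, hbc⟩ := exists_triangle_of_length_eq_three hl
  obtain ⟨x, hx, d, hd, hxd⟩ := exists_adj_mem_notMem hG (S := {a, b, c}) (by simp)
    (Finset.card_le_three.trans_lt h4)
  have hn : [a, b, c, d].Nodup := by grind [SimpleGraph.Adj.ne]
  simp only [Finset.mem_insert, Finset.mem_singleton] at hx
  rcases hx with rfl | rfl | rfl
  · exact ⟨x, b, c, d, hn, hab, hac, hbc, hxd⟩
  · exact ⟨x, a, c, d, by grind, hab.symm, hbc, hac, hxd⟩
  · exact ⟨x, a, b, d, by grind, hac.symm, hbc.symm, hab, hxd⟩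

theorem cfcNum_add_three_le_of_four_cycle (hG : G.Connected) (h5 : 5 ≤ Fintype.card V)
    (hn : [a, b, c, d].Nodup) (hab : G.Adj a b) (hbc : G.Adj b c) (hcd : G.Adj c d)
    (hda : G.Adj d a) : cfcNum G + 3 ≤ Fintype.card V := by
  classical
  obtain ⟨x, hx, e, he, hxe⟩ := exists_adj_mem_notMem hG (S := {a, b, c, d}) (by simp)
    (Finset.card_le_four.trans_lt h5)
  simp only [Finset.mem_insert, Finset.mem_singleton] at hx
  apply cfcNum_add_three_le_of_banner hG
  rcases hx with rfl | rfl | rfl | rfl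
  · exact banner_isContained (by grind) hab hbc hcd hda hxe
  · exact banner_isContained (by grind) hbc hcd hda hab hxe
  · exact banner_isContained (by grind) hcd hda hab hbc hxe
  · exact banner_isContained (by grind) hda hab hbc hcd hxe

theorem cfcNum_add_three_le_of_triangle_pendant (hG : G.Connected) (h5 : 5 ≤ Fintype.card V)
    (hn : [a, b, c, d].Nodup) (hab : G.Adj a b) (hac : G.Adj a c) (hbc : G.Adj b c)
    (had : G.Adj a d) : cfcNum G + 3 ≤ Fintype.card V := by
  classical
  obtain ⟨x, hx, e, he, hxe⟩ := exists_adj_mem_notMem hG (S := {a, b, c, d}) (by simp)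
    (Finset.card_le_four.trans_lt h5)
  simp only [Finset.mem_insert, Finset.mem_singleton] at hx
  rcases hx with rfl | rfl | rfl | rfl
  · exact cfcNum_add_three_le_of_cricket hG (cricket_isContained (by grind) hab hac hbc had hxe)
  · exact cfcNum_add_three_le_of_bull hG (bull_isContained (by grind) hab hac hbc had hxe)
  · exact cfcNum_add_three_le_of_bull hG (bull_isContained (by grind) hac hab hbc.symm had hxe)
  · exact cfcNum_add_three_le_of_triangle_path hG (by grind) hab hac hbc had hxe

theorem cfcNum_add_three_le_of_isCycle (hG : G.Connected) (h5 : 5 ≤ Fintype.card V)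
    {p : G.Walk v v} (hp : p.IsCycle) : cfcNum G + 3 ≤ Fintype.card V := by
  obtain hl | hl | hl | hl : p.length = 3 ∨ p.length = 4 ∨ p.length = 5 ∨ 6 ≤ p.length := by
    have := hp.three_le_length
    omega
  · obtain ⟨a, b, c, d, hn, hab, hac, hbc, had⟩ :=
      exists_triangle_pendant_of_length_eq_three hG (by omega) hl
    exact cfcNum_add_three_le_of_triangle_pendant hG h5 hn hab hac hbc had
  · obtain ⟨a, b, c, d, hn, hab, hbc, hcd, hda⟩ := exists_four_cycle_of_isCycle hp hl
    exact cfcNum_add_three_le_of_four_cycle hG h5 hn hab hbc hcd hda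
  · exact cfcNum_add_three_le_of_cycleGraph_five hG
      ((cycleGraph_isContained_iff (by omega)).2 ⟨v, p, hp, hl⟩)
  · refine cfcNum_add_three_le_of_isPath hG hp.isPath_tail ?_
    rw [← Nat.add_le_add_iff_right (n := 1), Walk.length_tail_add_one hp.not_nil]
    exact hl

theorem cfcNum_add_three_le_of_not_isTree (hG : G.Connected) (h5 : 5 ≤ Fintype.card V)
    (hT : ¬ G.IsTree) : cfcNum G + 3 ≤ Fintype.card V := by
  obtain ⟨v, p, hp⟩ := exists_isCycle_of_not_isTree hG hT
  exact cfcNum_add_three_le_of_isCycle hG h5 hp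

end Cycles

section Trees

variable {V : Type*} {G : SimpleGraph V}

theorem two_lt_degree_of_isPath [Fintype V] [DecidableRel G.Adj] {s t u v x y : V}
    {hxs : G.Adj x s} {hxt : G.Adj x t} {q : G.Walk s u} {r : G.Walk t v}
    (hp : ((Walk.cons hxs q).reverse.append (.cons hxt r)).IsPath) (hxy : G.Adj x y)
    (hy : y ∉ ((Walk.cons hxs q).reverse.append (.cons hxt r)).support) : 2 < G.degree x := by
  have hs := q.start_mem_support
  have ht := r.start_mem_support
  have hn := hp.support_nodup
  simp only [Walk.support_append, Walk.support_reverse, Walk.support_cons, List.tail_cons] at hn hy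
  rw [← card_neighborFinset_eq_degree, Finset.two_lt_card_iff]
  exact ⟨s, t, y, by simpa using hxs, by simpa using hxt, by simpa using hxy,
    by grind, by grind, by grind⟩

theorem exists_isHamiltonian_of_degree_le_two [Fintype V] [DecidableEq V] [DecidableRel G.Adj]
    (hG : G.Connected) (hdeg : ∀ v, G.degree v ≤ 2) :
    ∃ u v, ∃ p : G.Walk u v, p.IsHamiltonian := by
  have := hG.nonempty
  obtain ⟨u, v, p, hp, hmax⟩ := Walk.exists_isPath_forall_isPath_length_le_length G
  -- An edge leaving a longest path starts at an interior vertex, which then has degree three.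
  refine ⟨u, v, p, hp.isHamiltonian_of_mem ?_⟩
  by_contra! ⟨z, hz⟩
  obtain ⟨w⟩ := hG.preconnected u z
  obtain ⟨⟨⟨x, y⟩, hxy⟩, -, hx, hy⟩ :=
    w.exists_boundary_dart {w | w ∈ p.support} p.start_mem_support hz
  change y ∉ p.support at hy
  obtain ⟨q, r, rfl⟩ := Walk.mem_support_iff_exists_append.1 hx
  obtain ⟨q, rfl⟩ : ∃ q' : G.Walk x u, q = q'.reverse := ⟨q.reverse, q.reverse_reverse.symm⟩
  cases q with
  | nil => exact absurd (hmax _ _ _ (hp.cons hy (h := hxy.symm))) (by simp)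
  | cons hxs q =>
    cases r with
    | nil => exact absurd (hmax _ _ _ (hp.concat hy hxy)) (by simp)
    | cons hxt r => exact (hdeg x).not_gt (two_lt_degree_of_isPath hp hxy hy)

theorem nonempty_iso_of_isContained {W : Type*} {H : SimpleGraph W} [Finite V] (hG : G.IsTree)
    (hH : H.Connected) (hHG : H ⊑ G) (hcard : Nat.card V ≤ Nat.card W) : Nonempty (G ≃g H) := by
  obtain ⟨f, hf⟩ := hHG
  have : Finite W := Finite.of_injective f hf
  let e : W ≃ V := Equiv.ofBijective f (hf.bijective_of_nat_card_le hcard)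
  have hle : H.map e.toEmbedding ≤ G := (map_le_iff_le_comap ..).2 fun _ _ h => f.map_adj h
  -- A tree has no proper connected spanning subgraph.
  have heq : H.map e.toEmbedding = G := hle.antisymm <|
    (isTree_iff_minimal_connected.1 hG).2 ((Iso.map e H).connected_iff.1 hH) hle
  exact ⟨heq ▸ (Iso.map e H).symm⟩

theorem isTree_pathGraph (n : ℕ) : (pathGraph (n + 1)).IsTree := by
  refine isTree_iff_connected_and_card.2 ⟨pathGraph_connected n, ?_⟩
  have hrange : (pathGraph (n + 1)).edgeSet =
      Set.range fun i : Fin n => s(i.castSucc, i.succ) := by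
    ext ⟨i, j⟩
    simp only [mem_edgeSet, pathGraph_adj, Set.mem_range, Sym2.eq_iff, Fin.ext_iff,
      Fin.val_castSucc, Fin.val_succ]
    refine ⟨?_, fun ⟨k, hk⟩ => by omega⟩
    rintro (h | h)
    exacts [⟨⟨i, by omega⟩, .inl ⟨rfl, h⟩⟩, ⟨⟨j, by omega⟩, .inr ⟨rfl, h⟩⟩]
  rw [hrange, Nat.card_range_of_injective fun i j h => ?_, Nat.card_fin, Nat.card_fin]
  grind

theorem exists_adj_adj_not_adj [Fintype V] [DecidableRel G.Adj] (hG : G.Connected) {w : V}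
    (hw : G.degree w + 2 ≤ Fintype.card V) :
    ∃ a x, G.Adj w a ∧ G.Adj a x ∧ w ≠ x ∧ ¬ G.Adj w x := by
  classical
  obtain ⟨a, ha, x, hx, hax⟩ := exists_adj_mem_notMem hG (S := insert w (G.neighborFinset w))
    (Finset.insert_nonempty _ _) (by simpa using Nat.lt_of_succ_le hw)
  simp only [Finset.mem_insert, mem_neighborFinset, not_or] at ha hx
  exact ⟨a, x, ha.resolve_left fun h => hx.2 (h ▸ hax), hax, Ne.symm hx.1, hx.2⟩

theorem cfcNum_add_two_le_of_degree [Fintype V] [DecidableRel G.Adj] (hG : G.Connected) {w : V}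
    (h2 : 2 ≤ G.degree w) (hw : G.degree w + 2 ≤ Fintype.card V) :
    cfcNum G + 2 ≤ Fintype.card V := by
  obtain ⟨a, x, hwa, hax, hwx, hnwx⟩ := exists_adj_adj_not_adj hG hw
  obtain ⟨b, hb, hba⟩ := Finset.exists_mem_ne (one_lt_two.trans_le h2) a
  rw [mem_neighborFinset] at hb
  refine cfcNum_add_two_le_of_path_four hG ?_ hb.symm hwa hax
  grind [SimpleGraph.Adj.ne]

theorem cfcNum_add_three_le_of_degree [Fintype V] [DecidableRel G.Adj] (hG : G.Connected) {w : V}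
    (h3 : 3 ≤ G.degree w) (hw : G.degree w + 3 ≤ Fintype.card V) :
    cfcNum G + 3 ≤ Fintype.card V := by
  classical
  obtain ⟨a, x, hwa, hax, hwx, hnwx⟩ := exists_adj_adj_not_adj hG (w := w) (by omega)
  obtain ⟨p, hp, y, hy, hpy⟩ := exists_adj_mem_notMem hG
    (S := insert x (insert w (G.neighborFinset w)))
    (Finset.insert_nonempty _ _) (by simpa [hwx.symm, hnwx] using Nat.lt_of_succ_le hw)
  simp only [Finset.mem_insert, mem_neighborFinset, not_or] at hp hy
  obtain ⟨hyx, hyw, hnwy⟩ := hy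
  by_cases hpax : p = a ∨ p = x
  · obtain ⟨b, hb, hba⟩ := Finset.exists_mem_ne (one_lt_two.trans h3) a
    obtain ⟨c, hc, hcab⟩ : ∃ c ∈ G.neighborFinset w, c ∉ ({a, b} : Finset V) :=
      Finset.exists_mem_notMem_of_card_lt_card (Finset.card_le_two.trans_lt h3)
    rw [mem_neighborFinset] at hb hc
    rcases hpax with rfl | rfl
    · exact cfcNum_add_three_le_of_cherries hG (by grind [SimpleGraph.Adj.ne])
        hb.symm hc hax.symm hpy (by simp) (by simp) hwa
    · exact cfcNum_add_three_le_of_cherries hG (by grind [SimpleGraph.Adj.ne])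
        hb.symm hc hax hpy (by simp) (by simp) hwa
  · have hwp : G.Adj w p := by grind
    obtain ⟨c, hc, hcap⟩ : ∃ c ∈ G.neighborFinset w, c ∉ ({a, p} : Finset V) :=
      Finset.exists_mem_notMem_of_card_lt_card (Finset.card_le_two.trans_lt h3)
    rw [mem_neighborFinset] at hc
    exact cfcNum_add_three_le_of_spider hG (by grind [SimpleGraph.Adj.ne]) hc hwa hax hwp hpy

theorem two_le_maxDegree [Fintype V] [DecidableRel G.Adj] (hG : G.Connected)
    (h3 : 3 ≤ Fintype.card V) : 2 ≤ G.maxDegree := by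
  by_contra! hlt
  have hdeg : ∀ v, G.degree v ≤ 1 := fun v => (G.degree_le_maxDegree v).trans (by omega)
  obtain ⟨w⟩ := hG.nonempty
  obtain ⟨a, x, hwa, hax, hwx, -⟩ := exists_adj_adj_not_adj hG (w := w)
    (by have := hdeg w; omega)
  have := hdeg a
  rw [← card_neighborFinset_eq_degree, Finset.card_le_one] at this
  exact hwx (this w (by simpa using hwa.symm) x (by simpa using hax))

theorem nonempty_iso_pathGraph_five [Fintype V] [DecidableRel G.Adj] (hT : G.IsTree)
    (h5 : 5 ≤ Fintype.card V) (hdeg : ∀ v, G.degree v ≤ 2)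
    (hcfc : Fintype.card V < cfcNum G + 3) : Nonempty (G ≃g pathGraph 5) := by
  classical
  obtain ⟨u, v, p, hp⟩ := exists_isHamiltonian_of_degree_le_two hT.connected hdeg
  have hl : p.length = 4 := by
    have := mt (cfcNum_add_three_le_of_isPath hT.connected hp.isPath) hcfc.not_ge
    have := hp.length_eq
    omega
  have hcard : Fintype.card V = 5 := by
    have := hp.length_eq
    omega
  refine nonempty_iso_of_isContained hT (pathGraph_connected 4) ?_ (by simp [hcard])
  have := hp.isPath.isContained_pathGraph
  rwa [hl] at this

theorem cfcNum_eq_three_of_iso_pathGraph_five (φ : G ≃g pathGraph 5) : cfcNum G = 3 := by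
  have := Fintype.ofEquiv _ φ.toEquiv.symm
  have hT := φ.isTree_iff.2 (isTree_pathGraph 4)
  have hadj {i j : Fin 5} (hij : i.val + 1 = j.val) : G.Adj (φ.symm i) (φ.symm j) :=
    φ.symm.map_adj_iff.2 (pathGraph_adj.2 (.inl hij))
  have hn : ([0, 1, 2, 3, 4].map φ.symm).Nodup :=
    List.Nodup.map φ.symm.injective (by decide)
  refine le_antisymm ?_ ?_
  · have := cfcNum_add_two_le_of_path_four hT.connected (hn.sublist (List.sublist_append_left
      ([0, 1, 2, 3].map φ.symm) _)) (hadj rfl) (hadj rfl) (hadj rfl)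
    have := Fintype.card_congr φ.toEquiv
    rw [Fintype.card_fin] at this
    omega
  · have hp : (Walk.cons (hadj (i := 0) (j := 1) rfl) (.cons (hadj (j := 2) rfl)
      (.cons (hadj (j := 3) rfl) (.cons (hadj (j := 4) rfl) .nil)))).IsPath := .mk' hn
    have := length_lt_two_pow_cfcNum hT hp
    contrapose! this
    exact Nat.pow_le_pow_right two_pos (Nat.le_of_lt_succ this)

theorem cfcNum_add_two_eq_card_of_maxDegree [Fintype V] [DecidableRel G.Adj] (hT : G.IsTree)
    (h3 : 3 ≤ Fintype.card V) (hdeg : G.maxDegree + 2 = Fintype.card V) :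
    cfcNum G + 2 = Fintype.card V := by
  have := hT.connected.nonempty
  obtain ⟨w, hw⟩ := G.exists_maximal_degree_vertex
  refine le_antisymm (cfcNum_add_two_le_of_degree hT.connected (w := w) ?_ ?_) ?_
  · exact hw ▸ two_le_maxDegree hT.connected h3
  · exact hw ▸ hdeg.le
  · exact hdeg ▸ Nat.add_le_add_right (maxDegree_le_cfcNum hT) 2

theorem maxDegree_eq_or_nonempty_iso_of_cfcNum_add_two_eq_card [Fintype V] [DecidableRel G.Adj]
    (hT : G.IsTree) (h3 : 3 ≤ Fintype.card V) (hcfc : cfcNum G + 2 = Fintype.card V) :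
    G.maxDegree + 2 = Fintype.card V ∨ Nonempty (G ≃g pathGraph 5) := by
  refine or_iff_not_imp_left.2 fun hne => ?_
  have hle := maxDegree_le_cfcNum hT
  have h2 := two_le_maxDegree hT.connected h3
  refine nonempty_iso_pathGraph_five hT (by omega) (fun w => ?_) (by omega)
  by_contra! hw
  have := G.degree_le_maxDegree w
  have := cfcNum_add_three_le_of_degree hT.connected hw (by omega)
  omega

end Trees

section SmallGraphs

variable {V : Type*} {G : SimpleGraph V} {a b c d : V}

theorem surjective_get_of_card_le [Fintype V] {l : List V} (hn : l.Nodup)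
    (hl : Fintype.card V ≤ l.length) : Function.Surjective l.get :=
  (hn.injective_get.bijective_of_nat_card_le (by simpa using hl)).surjective

theorem nonempty_iso_of_comap_get_eq [Fintype V] {l : List V} (hn : l.Nodup)
    (hl : Fintype.card V ≤ l.length) {H : SimpleGraph (Fin l.length)} (h : G.comap l.get = H) :
    Nonempty (G ≃g H) :=
  let e : Fin l.length ≃ V :=
    Equiv.ofBijective l.get ⟨hn.injective_get, surjective_get_of_card_le hn hl⟩
  ⟨h ▸ (Iso.comap e G).symm⟩

theorem nonempty_iso_of_four_cycle [Fintype V] (h4 : Fintype.card V = 4) (hne : G ≠ ⊤)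
    (hn : [a, b, c, d].Nodup) (hab : G.Adj a b) (hbc : G.Adj b c) (hcd : G.Adj c d)
    (had : G.Adj a d) : Nonempty (G ≃g cycle4) ∨ Nonempty (G ≃g cycle4PlusChord) := by
  by_cases hac : G.Adj a c <;> by_cases hbd : G.Adj b d
  · refine absurd (top_unique fun u v (huv : u ≠ v) => ?_) hne
    obtain ⟨i, rfl⟩ := surjective_get_of_card_le hn h4.le u
    obtain ⟨j, rfl⟩ := surjective_get_of_card_le hn h4.le v
    fin_cases i <;> fin_cases j <;> simp_all [G.adj_comm]
  · refine .inr (nonempty_iso_of_comap_get_eq hn h4.le (H := cycle4PlusChord) ?_)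
    ext i j
    fin_cases i <;> fin_cases j <;> simp [cycle4PlusChord, *, G.adj_comm]
  · refine .inr (nonempty_iso_of_comap_get_eq (l := [b, c, d, a]) (by grind) h4.le
      (H := cycle4PlusChord) ?_)
    ext i j
    fin_cases i <;> fin_cases j <;> simp [cycle4PlusChord, *, G.adj_comm]
  · refine .inl (nonempty_iso_of_comap_get_eq hn h4.le (H := cycle4) ?_)
    ext i j
    fin_cases i <;> fin_cases j <;> simp [cycle4, *, G.adj_comm]

theorem nonempty_iso_of_triangle_pendant [Fintype V] (h4 : Fintype.card V = 4) (hne : G ≠ ⊤)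
    (hn : [a, b, c, d].Nodup) (hab : G.Adj a b) (hac : G.Adj a c) (hbc : G.Adj b c)
    (had : G.Adj a d) : Nonempty (G ≃g starK13PlusEdge) ∨
      Nonempty (G ≃g cycle4) ∨ Nonempty (G ≃g cycle4PlusChord) := by
  by_cases hbd : G.Adj b d
  · exact .inr (nonempty_iso_of_four_cycle h4 hne (by grind) hac hbc.symm hbd had)
  by_cases hcd : G.Adj c d
  · exact .inr (nonempty_iso_of_four_cycle h4 hne hn hab hbc hcd had)
  refine .inl (nonempty_iso_of_comap_get_eq hn h4.le (H := starK13PlusEdge) ?_)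
  ext i j
  fin_cases i <;> fin_cases j <;> simp [starK13PlusEdge, *, G.adj_comm]

theorem nonempty_iso_of_not_isTree [Fintype V] (hG : G.Connected) (h4 : Fintype.card V = 4)
    (hT : ¬ G.IsTree) (hne : G ≠ ⊤) : Nonempty (G ≃g starK13PlusEdge) ∨
      Nonempty (G ≃g cycle4) ∨ Nonempty (G ≃g cycle4PlusChord) := by
  obtain ⟨v, p, hp⟩ := exists_isCycle_of_not_isTree hG hT
  obtain hl | hl : p.length = 3 ∨ p.length = 4 := by
    have := hp.three_le_length
    have := hp.isPath_tail.length_lt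
    have := Walk.length_tail_add_one hp.not_nil
    omega
  · obtain ⟨a, b, c, d, hn, hab, hac, hbc, had⟩ :=
      exists_triangle_pendant_of_length_eq_three hG h4.ge hl
    exact nonempty_iso_of_triangle_pendant h4 hne hn hab hac hbc had
  · obtain ⟨a, b, c, d, hn, hab, hbc, hcd, hda⟩ := exists_four_cycle_of_isCycle hp hl
    exact .inr (nonempty_iso_of_four_cycle h4 hne hn hab hbc hcd hda.symm)

theorem cfcNum_add_two_eq_card_of_iso [Fintype V] (hG : G.Connected) {H : SimpleGraph (Fin 4)}
    (φ : G ≃g H) {i j k l : Fin 4} (hn : [i, j, k, l].Nodup) (hij : H.Adj i j) (hjk : H.Adj j k)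
    (hkl : H.Adj k l) {x y : Fin 4} (hxy : x ≠ y) (hH : ¬ H.Adj x y) :
    cfcNum G + 2 = Fintype.card V := by
  refine le_antisymm (cfcNum_add_two_le_of_path_four hG (hn.map φ.symm.injective)
    (φ.symm.map_adj_iff.2 hij) (φ.symm.map_adj_iff.2 hjk) (φ.symm.map_adj_iff.2 hkl)) ?_
  rw [Fintype.card_congr φ.toEquiv, Fintype.card_fin]
  by_contra! hlt
  have htop : G = ⊤ := (cfcNum_le_one_iff hG).1 (by omega)
  exact hH (φ.symm.map_adj_iff.1 (htop ▸ φ.symm.injective.ne hxy))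

theorem cfcNum_add_two_eq_card_of_iso_starK13PlusEdge [Fintype V] (hG : G.Connected)
    (φ : G ≃g starK13PlusEdge) : cfcNum G + 2 = Fintype.card V := by
  refine cfcNum_add_two_eq_card_of_iso hG φ (i := 3) (j := 0) (k := 1) (l := 2)
    (x := 1) (y := 3) ?_ ?_ ?_ ?_ ?_ ?_ <;> simp [starK13PlusEdge]

theorem cfcNum_add_two_eq_card_of_iso_cycle4 [Fintype V] (hG : G.Connected)
    (φ : G ≃g cycle4) : cfcNum G + 2 = Fintype.card V := by
  refine cfcNum_add_two_eq_card_of_iso hG φ (i := 0) (j := 1) (k := 2) (l := 3)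
    (x := 0) (y := 2) ?_ ?_ ?_ ?_ ?_ ?_ <;> simp [cycle4]

theorem cfcNum_add_two_eq_card_of_iso_cycle4PlusChord [Fintype V] (hG : G.Connected)
    (φ : G ≃g cycle4PlusChord) : cfcNum G + 2 = Fintype.card V := by
  refine cfcNum_add_two_eq_card_of_iso hG φ (i := 0) (j := 1) (k := 2) (l := 3)
    (x := 1) (y := 3) ?_ ?_ ?_ ?_ ?_ ?_ <;> simp [cycle4PlusChord]

theorem cfcNum_add_two_eq_card_of_iso_completeGraph [Fintype V] (φ : G ≃g completeGraph (Fin 3)) :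
    cfcNum G + 2 = Fintype.card V := by
  have hcard := Fintype.card_congr φ.toEquiv
  rw [Fintype.card_fin] at hcard
  have : Nontrivial V := Fintype.one_lt_card_iff_nontrivial.1 (by omega)
  have htop : G = ⊤ := top_unique fun u v huv => φ.map_adj_iff.1 (φ.injective.ne huv)
  have hG : G.Connected := htop ▸ connected_top
  have := (cfcNum_le_one_iff hG).2 htop
  have := cfcNum_pos hG
  omega

theorem nonempty_iso_of_cfcNum_add_two_eq_card [Fintype V] (hG : G.Connected) (hT : ¬ G.IsTree)
    (h3 : 3 ≤ Fintype.card V) (hcfc : cfcNum G + 2 = Fintype.card V) :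
    Nonempty (G ≃g completeGraph (Fin 3)) ∨ Nonempty (G ≃g starK13PlusEdge) ∨
      Nonempty (G ≃g cycle4) ∨ Nonempty (G ≃g cycle4PlusChord) := by
  obtain h3 | h4 | h5 : Fintype.card V = 3 ∨ Fintype.card V = 4 ∨ 5 ≤ Fintype.card V := by omega
  · have htop := (cfcNum_le_one_iff hG).1 (by omega)
    exact .inl ⟨htop ▸ Iso.completeGraph (Fintype.equivFinOfCardEq h3)⟩
  · refine .inr (nonempty_iso_of_not_isTree hG h4 hT fun htop => ?_)
    have := (cfcNum_le_one_iff hG).2 htop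
    omega
  · have := cfcNum_add_three_le_of_not_isTree hG h5 hT
    omega

end SmallGraphs

/-- For a connected graph G on n ≥ 3 vertices, cfc(G) = n − 2 iff G is a tree with
Δ(G) = n − 2, or G is one of K_3, K_{1,3}+e, K_{2,2}, K_{2,2}+e, P_5. -/
theorem cfcNum_eq_card_sub_two_iff {V : Type*} [Fintype V] (G : SimpleGraph V)
    [DecidableRel G.Adj] (hG : G.Connected) (n : ℕ) (hn : Fintype.card V = n)
    (h3 : 3 ≤ n) :
    cfcNum G = n - 2 ↔
      (G.IsTree ∧ G.maxDegree = n - 2) ∨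
      Nonempty (G ≃g completeGraph (Fin 3)) ∨
      Nonempty (G ≃g starK13PlusEdge) ∨
      Nonempty (G ≃g cycle4) ∨
      Nonempty (G ≃g cycle4PlusChord) ∨
      Nonempty (G ≃g SimpleGraph.pathGraph 5) := by
  subst hn
  simp only [eq_tsub_iff_add_eq_of_le (show 2 ≤ Fintype.card V by omega)]
  constructor
  · intro hcfc
    by_cases hT : G.IsTree
    · have := maxDegree_eq_or_nonempty_iso_of_cfcNum_add_two_eq_card hT h3 hcfc
      tauto
    · have := nonempty_iso_of_cfcNum_add_two_eq_card hG hT h3 hcfc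
      tauto
  · rintro (⟨hT, hdeg⟩ | ⟨⟨φ⟩⟩ | ⟨⟨φ⟩⟩ | ⟨⟨φ⟩⟩ | ⟨⟨φ⟩⟩ | ⟨⟨φ⟩⟩)
    · exact cfcNum_add_two_eq_card_of_maxDegree hT h3 hdeg
    · exact cfcNum_add_two_eq_card_of_iso_completeGraph φ
    · exact cfcNum_add_two_eq_card_of_iso_starK13PlusEdge hG φ
    · exact cfcNum_add_two_eq_card_of_iso_cycle4 hG φ
    · exact cfcNum_add_two_eq_card_of_iso_cycle4PlusChord hG φ
    · rw [cfcNum_eq_three_of_iso_pathGraph_five φ, Fintype.card_congr φ.toEquiv, Fintype.card_fin]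
end

section
/- Let G be a connected noncomplete simple graph whose complement Ḡ is connected with diameter at least 3. Then cfc(G) = 2 if and only if every vertex of G is incident with at most two cut-edges of G. -/
/-!
If the complement of `G` has diameter at least `3`, then `G` has a dominating edge `uv`, so the
edges at `u` and at `v` form a spanning double star. Pick a set `X` with `v ∈ X` and `u ∉ X`, and
give color `1` to the edges between `X` and its complement except `uv`, and color `0` to the rest.
The outer end of a spoke of color `1` has a conflict-free path to every vertex, except that two
such ends at the same hub may both be leaves of `G`. There are at most two leaves at each hub,
since they hang on cut-edges. If `uv` is itself a cut-edge, it counts among the cut-edges at each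
hub, so `X = N(u)` works. Otherwise one leaf at each hub is moved across the cut, which gives its
edge color `0`; a detour `u a b v` around `uv`, colored `1 0 0`, then serves the moved leaves.

Conversely, two cut-edges at a vertex form the only path between their other ends, so they need
different colors.
-/

open SimpleGraph

section ConflictFreeJoined

variable {V : Type*} {G : SimpleGraph V} {c : Sym2 V → ℕ} {k : ℕ} {u x y : V}

/-- The vertices `x` and `y` are joined by a path of `G` on which exactly one edge has color `k`. -/
def UniqueColorJoined (G : SimpleGraph V) (c : Sym2 V → ℕ) (k : ℕ) (x y : V) : Prop :=
  ∃ p : G.Walk x y, p.IsPath ∧ (p.edges.map c).count k = 1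

/-- The vertices `x` and `y` are joined by a conflict-free path of `G`. -/
def ConflictFreeJoined (G : SimpleGraph V) (c : Sym2 V → ℕ) (x y : V) : Prop :=
  ∃ k, UniqueColorJoined G c k x y

lemma UniqueColorJoined.symm (h : UniqueColorJoined G c k x y) : UniqueColorJoined G c k y x := by
  obtain ⟨p, hp, hk⟩ := h
  refine ⟨p.reverse, hp.reverse, ?_⟩
  rwa [Walk.edges_reverse, List.map_reverse, List.count_reverse]

lemma ConflictFreeJoined.symm (h : ConflictFreeJoined G c x y) : ConflictFreeJoined G c y x :=
  h.imp fun _ => UniqueColorJoined.symm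

instance : Std.Symm (UniqueColorJoined G c k) := ⟨fun _ _ => .symm⟩

instance : Std.Symm (ConflictFreeJoined G c) := ⟨fun _ _ => .symm⟩

lemma conflictFreeJoined_of_adj (h : G.Adj x y) : ConflictFreeJoined G c x y :=
  ⟨c s(x, y), .cons h .nil, by simp [h.ne], by simp⟩

lemma isCFCColoring_of_conflictFreeJoined (h : ∀ x y, x ≠ y → ConflictFreeJoined G c x y) :
    IsCFCColoring G c := by
  intro x y hxy
  obtain ⟨k, p, hp, hk⟩ := h x y hxy
  obtain ⟨e, he⟩ : ∃ e, p.edges.filter (c · == k) = [e] := by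
    rw [← List.length_eq_one_iff, ← hk, List.count, List.countP_map, List.countP_eq_length_filter]
    rfl
  have hmem (e') : e' ∈ p.edges ∧ c e' = k ↔ e' = e := by
    rw [← List.mem_singleton (b := e), ← he, List.mem_filter, beq_iff_eq]
  obtain ⟨hep, rfl⟩ := (hmem e).2 rfl
  exact ⟨⟨p, hp⟩, e, hep, fun e' he' hc => (hmem e').1 ⟨he', hc⟩⟩

end ConflictFreeJoined

section Encard

variable {α : Type*} {s : Set α}

lemma encard_sdiff_singleton_le_one {x : α} (hs : s.encard ≤ 2) (hx : x ∈ s) :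
    (s \ {x}).encard ≤ 1 := by
  rw [Set.encard_sdiff_singleton_of_mem hx]
  exact tsub_le_iff_right.2 (hs.trans_eq one_add_one_eq_two.symm)

lemma exists_subset_subsingleton_sdiff (hs : s.encard ≤ 2) :
    ∃ t ⊆ s, t.Subsingleton ∧ (s \ t).Subsingleton := by
  rcases s.eq_empty_or_nonempty with rfl | ⟨x, hx⟩
  · exact ⟨∅, by simp⟩
  · refine ⟨{x}, by simpa, by simp, ?_⟩
    exact Set.encard_le_one_iff_subsingleton.1 (encard_sdiff_singleton_le_one hs hx)

end Encard

section Leaves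

variable {V : Type*} {G : SimpleGraph V} {u v x y : V}

/-- The leaves of `G` hanging on the vertex `u`. -/
def leavesAt (G : SimpleGraph V) (u : V) : Set V := {x | G.neighborSet x = {u}}

lemma mem_leavesAt_iff : x ∈ leavesAt G u ↔ ∀ y, G.Adj x y ↔ y = u :=
  Set.ext_iff

lemma adj_of_mem_leavesAt (hx : x ∈ leavesAt G u) : G.Adj x u :=
  (mem_leavesAt_iff.1 hx u).2 rfl

lemma notMem_leavesAt_of_adj (h : G.Adj x y) (hyu : y ≠ u) : x ∉ leavesAt G u :=
  fun hx => hyu ((mem_leavesAt_iff.1 hx y).1 h)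

lemma exists_adj_ne_of_notMem_leavesAt (h : G.Adj x u) (hx : x ∉ leavesAt G u) :
    ∃ w, G.Adj x w ∧ w ≠ u := by
  by_contra! hxu
  exact hx (mem_leavesAt_iff.2 fun w => ⟨hxu w, fun hw => hw ▸ h⟩)

lemma isBridge_of_mem_leavesAt (hx : x ∈ leavesAt G u) : G.IsBridge s(u, x) := by
  rw [isBridge_iff]
  rintro ⟨p⟩
  have hnil : ¬ p.reverse.Nil := fun hnil => (adj_of_mem_leavesAt hx).ne hnil.eq
  obtain ⟨hadj, hne⟩ := deleteEdges_adj.1 (p.reverse.adj_snd hnil)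
  exact hne (by simp [(mem_leavesAt_iff.1 hx _).1 hadj, Sym2.eq_swap])

lemma UniqueColorJoined.of_mem_leavesAt {c : Sym2 V → ℕ} {k : ℕ} (h : UniqueColorJoined G c k u y)
    (hx : x ∈ leavesAt G u) (hc : c s(x, u) ≠ k) (hxy : x ≠ y) : UniqueColorJoined G c k x y := by
  obtain ⟨p, hp, hcount⟩ := h
  have hadj : G.Adj x u := adj_of_mem_leavesAt hx
  have hxp : x ∉ p.support :=
    hp.isTrail.not_mem_support_of_subsingleton_neighborSet hadj.ne hxy
      (hx ▸ Set.subsingleton_singleton)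
  exact ⟨.cons hadj p, hp.cons hxp, by simpa [List.count_cons, hc] using hcount⟩

lemma pairwise_conflictFreeJoined_union_leaves {c : Sym2 V → ℕ} {k : ℕ} {K L M : Set V}
    (hK : K.Pairwise (UniqueColorJoined G c k)) (hu : u ∈ K) (hv : v ∈ K) (huv : u ≠ v)
    (hL : L ⊆ leavesAt G u) (hM : M ⊆ leavesAt G v) (hLss : L.Subsingleton) (hMss : M.Subsingleton)
    (hLc : ∀ x ∈ L, c s(x, u) ≠ k) (hMc : ∀ x ∈ M, c s(x, v) ≠ k) :
    (K ∪ (L ∪ M)).Pairwise (ConflictFreeJoined G c) := by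
  have joined_leaf {w x y} (hw : w ∈ K) (hx : x ∈ leavesAt G w) (hc : c s(x, w) ≠ k) (hy : y ∈ K)
      (hxy : x ≠ y) : ConflictFreeJoined G c x y := by
    by_cases hwy : w = y
    · exact conflictFreeJoined_of_adj (hwy ▸ adj_of_mem_leavesAt hx)
    · exact ⟨k, (hK hw hy hwy).of_mem_leavesAt hx hc hxy⟩
  rw [Set.pairwise_union_of_symm, Set.pairwise_union_of_symm]
  refine ⟨hK.mono' fun _ _ h => ⟨k, h⟩, ⟨hLss.pairwise _, hMss.pairwise _, ?_⟩, ?_⟩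
  · intro l hl m hm hlm
    by_cases hlv : l = v
    · exact (joined_leaf hv (hM hm) (hMc m hm) (hlv ▸ hv) hlm.symm).symm
    · have hvl : UniqueColorJoined G c k v l :=
        ((hK hu hv huv).of_mem_leavesAt (hL hl) (hLc l hl) hlv).symm
      exact ⟨k, (hvl.of_mem_leavesAt (hM hm) (hMc m hm) hlm.symm).symm⟩
  · rintro y hy x (hx | hx) hyx
    · exact (joined_leaf hu (hL hx) (hLc x hx) hy hyx.symm).symm
    · exact (joined_leaf hv (hM hx) (hMc x hx) hy hyx.symm).symm

end Leaves

section DominatingEdge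

variable {V : Type*} {G : SimpleGraph V} {u v a b : V}

/-- The edge `uv` dominates `G`: every other vertex is adjacent to `u` or to `v`. -/
structure IsDominatingEdge (G : SimpleGraph V) (u v : V) : Prop where
  adj : G.Adj u v
  adj_or_adj : ∀ x, x ≠ u → x ≠ v → G.Adj u x ∨ G.Adj v x

lemma IsDominatingEdge.symm (h : IsDominatingEdge G u v) : IsDominatingEdge G v u :=
  ⟨h.adj.symm, fun x hv hu => (h.adj_or_adj x hu hv).symm⟩

lemma exists_isDominatingEdge (h : 3 ≤ Gᶜ.diam) : ∃ u v, IsDominatingEdge G u v := by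
  by_contra! hdom
  have hediam : Gᶜ.ediam ≤ (2 : ℕ) := ediam_le_iff.2 fun u v => by
    by_contra! huv
    obtain ⟨hne, hadj, hcommon⟩ := two_lt_edist_iff.1 huv
    refine hdom u v ⟨by simpa [hne] using hadj, fun x hxu hxv => ?_⟩
    have hx : x ∉ Gᶜ.commonNeighbors u v := Set.eq_empty_iff_forall_notMem.1 hcommon x
    rw [mem_commonNeighbors, compl_adj, compl_adj] at hx
    tauto
  exact absurd (h.trans (ENat.toNat_le_of_le_natCast hediam)) (by norm_num)

/-- The walk `u a b v`, shortened to `u a v` when `b = v`, leads from `u` to `v` without using the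
edge `uv`. -/
structure IsDetour (G : SimpleGraph V) (u v a b : V) : Prop where
  adj_left : G.Adj u a
  adj : G.Adj a b
  eq_or_adj : b = v ∨ G.Adj v b
  ne_right : a ≠ v
  ne_left : b ≠ u

lemma IsDominatingEdge.exists_isDetour (h : IsDominatingEdge G u v) (huv : ¬ G.IsBridge s(u, v)) :
    ∃ a b, IsDetour G u v a b := by
  rw [isBridge_iff, not_not] at huv
  obtain ⟨p⟩ := huv
  -- The first edge of `p` leaving the closed neighborhood of `u` in `G - uv`.
  obtain ⟨⟨⟨a, b⟩, hab⟩, -, ha, hb⟩ :=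
    p.exists_boundary_dart ({u} ∪ (G.neighborSet u \ {v})) (by simp) (by simp [h.adj.ne'])
  have hadj : G.Adj a b := (deleteEdges_adj.1 hab).1
  simp only [Set.mem_union, Set.mem_singleton_iff, Set.mem_sdiff, mem_neighborSet, not_or,
    not_and_not_right] at ha hb
  rcases ha with rfl | ⟨hua, hav⟩
  · have hbv : b = v := hb.2 hadj
    simp [hbv] at hab
  · have hb_or := h.adj_or_adj b hb.1
    exact ⟨a, b, hua, hadj, by tauto, hav, hb.1⟩

end DominatingEdge

section CutColoring

variable {V : Type*} {G : SimpleGraph V} {X : Set V} {f : Sym2 V} {x y : V}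

/-- The coloring giving color `1` to the edges of the cut between `X` and its complement, except
for the edge `f`, and color `0` to everything else. With `f = s(u, v)` a dominating edge and a
suitable `X`, it makes `G` conflict-free connected. -/
noncomputable def cutColoring (G : SimpleGraph V) (X : Set V) (f : Sym2 V) : Sym2 V → ℕ :=
  ((G.between X Xᶜ).edgeSet \ {f}).indicator 1

lemma cutColoring_eq_zero_or_one (G : SimpleGraph V) (X : Set V) (f e : Sym2 V) :
    cutColoring G X f e = 0 ∨ cutColoring G X f e = 1 := by
  by_cases he : e ∈ (G.between X Xᶜ).edgeSet \ {f} <;> simp [cutColoring, he]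

lemma cutColoring_lt_two (G : SimpleGraph V) (X : Set V) (f e : Sym2 V) :
    cutColoring G X f e < 2 := by
  have := cutColoring_eq_zero_or_one G X f e
  lia

lemma cutColoring_eq_one_iff (h : G.Adj x y) :
    cutColoring G X f s(x, y) = 1 ↔ ¬ (x ∈ X ↔ y ∈ X) ∧ s(x, y) ≠ f := by
  rw [cutColoring, Set.indicator_eq_one_iff_mem, Set.mem_sdiff, mem_edgeSet, between_adj]
  simp only [Set.mem_compl_iff, Set.mem_singleton_iff, h]
  tauto

lemma cutColoring_eq_zero_iff (h : G.Adj x y) :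
    cutColoring G X f s(x, y) = 0 ↔ (x ∈ X ↔ y ∈ X) ∨ s(x, y) = f := by
  have hone := cutColoring_eq_one_iff (X := X) (f := f) h
  have hzero_or := cutColoring_eq_zero_or_one G X f s(x, y)
  grind

lemma cutColoring_compl (G : SimpleGraph V) (X : Set V) (f : Sym2 V) :
    cutColoring G Xᶜ f = cutColoring G X f := by
  rw [cutColoring, cutColoring, compl_compl, between_comm]

end CutColoring

section Spokes

variable {V : Type*} {G : SimpleGraph V} {X : Set V} {u v w a b t : V}

/-- The neighbors of `u` in `X` other than `v`. For `u ∉ X` these are the vertices that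
`cutColoring G X s(u, v)` joins to `u` by an edge of color `1`. -/
def spokeEnds (G : SimpleGraph V) (X : Set V) (u v : V) : Set V := (G.neighborSet u ∩ X) \ {v}

lemma conflictFreeJoined_of_mem_spokeEnds_of_notMem (h : IsDominatingEdge G u v)
    (hu : u ∉ X) (ha : a ∈ spokeEnds G X u v) (ht : t ∉ spokeEnds G X u v) :
    ConflictFreeJoined G (cutColoring G X s(u, v)) a t := by
  have hat : a ≠ t := fun hat => ht (hat ▸ ha)
  obtain ⟨⟨hua : G.Adj u a, haX⟩, hav : a ≠ v⟩ := ha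
  have hau1 : cutColoring G X s(u, v) s(a, u) = 1 :=
    (cutColoring_eq_one_iff hua.symm).2 (by grind)
  have huv0 : cutColoring G X s(u, v) s(u, v) = 0 := (cutColoring_eq_zero_iff h.adj).2 (.inr rfl)
  by_cases htu : t = u
  · exact conflictFreeJoined_of_adj (htu ▸ hua.symm)
  by_cases htv : t = v
  · subst htv
    exact ⟨0, .cons hua.symm (.cons h.adj .nil), by simp [hua.ne', h.adj.ne, hav],
      by simp [hau1, huv0]⟩
  by_cases hut : G.Adj u t
  · have hut0 : cutColoring G X s(u, v) s(u, t) = 0 :=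
      (cutColoring_eq_zero_iff hut).2 (by simp_all [spokeEnds])
    exact ⟨0, .cons hua.symm (.cons hut .nil), by simp [hua.ne', hat, hut.ne],
      by simp [hau1, hut0]⟩
  · have hvt : G.Adj v t := (h.adj_or_adj t htu htv).resolve_left hut
    have hpath : (Walk.cons hua.symm (.cons h.adj (.cons hvt .nil))).IsPath := by
      simp [hua.ne', hat, hav, h.adj.ne, hvt.ne, Ne.symm htu]
    rcases cutColoring_eq_zero_or_one G X s(u, v) s(v, t) with hvt0 | hvt1
    · exact ⟨1, _, hpath, by simp [hau1, hvt0, huv0]⟩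
    · exact ⟨0, _, hpath, by simp [hau1, hvt1, huv0]⟩

lemma conflictFreeJoined_of_mem_spokeEnds_of_adj (h : IsDominatingEdge G u v)
    (hu : u ∉ X) (hv : v ∈ X) (ha : a ∈ spokeEnds G X u v) (hb : b ∈ spokeEnds G X u v)
    (hab : a ≠ b) (haw : G.Adj a w) (hwu : w ≠ u) :
    ConflictFreeJoined G (cutColoring G X s(u, v)) a b := by
  obtain ⟨⟨hua : G.Adj u a, haX⟩, hav : a ≠ v⟩ := ha
  obtain ⟨⟨hub : G.Adj u b, hbX⟩, hbv : b ≠ v⟩ := hb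
  have hub1 : cutColoring G X s(u, v) s(u, b) = 1 := (cutColoring_eq_one_iff hub).2 (by grind)
  have hvu0 : cutColoring G X s(u, v) s(v, u) = 0 :=
    (cutColoring_eq_zero_iff h.adj.symm).2 (.inr Sym2.eq_swap)
  have haw_iff : cutColoring G X s(u, v) s(a, w) = 0 ↔ w ∈ X := by
    rw [cutColoring_eq_zero_iff haw]
    grind
  by_cases hwb : w = b
  · exact conflictFreeJoined_of_adj (hwb ▸ haw)
  by_cases hwv : w = v
  · subst hwv
    have haw0 : cutColoring G X s(u, w) s(a, w) = 0 := haw_iff.2 hv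
    exact ⟨1, .cons haw (.cons h.adj.symm (.cons hub .nil)),
      by simp [*, hua.ne', hub.ne, hbv.symm], by simp [*]⟩
  by_cases huw : G.Adj u w
  · have hpath : (Walk.cons haw (.cons huw.symm (.cons hub .nil))).IsPath := by
      simp [*, hua.ne', hub.ne, haw.ne]
    have hwu_iff : cutColoring G X s(u, v) s(w, u) = 1 ↔ w ∈ X := by
      rw [cutColoring_eq_one_iff huw.symm]
      grind
    have haw_or := cutColoring_eq_zero_or_one G X s(u, v) s(a, w)
    have hwu_or := cutColoring_eq_zero_or_one G X s(u, v) s(w, u)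
    exact ⟨0, _, hpath, by by_cases hwX : w ∈ X <;> simp_all⟩
  · have hvw : G.Adj v w := (h.adj_or_adj w hwu hwv).resolve_left huw
    have hpath : (Walk.cons haw (.cons hvw.symm (.cons h.adj.symm (.cons hub .nil)))).IsPath := by
      simp [*, hua.ne', hub.ne, h.adj.ne', haw.ne, hbv.symm]
    have hwv_iff : cutColoring G X s(u, v) s(w, v) = 0 ↔ w ∈ X := by
      rw [cutColoring_eq_zero_iff hvw.symm]
      grind
    rcases cutColoring_eq_zero_or_one G X s(u, v) s(a, w) with haw0 | haw1
    · exact ⟨1, _, hpath, by simp_all⟩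
    · have hwv_or := cutColoring_eq_zero_or_one G X s(u, v) s(w, v)
      exact ⟨0, _, hpath, by simp_all⟩

lemma conflictFreeJoined_of_mem_spokeEnds (h : IsDominatingEdge G u v) (hu : u ∉ X) (hv : v ∈ X)
    (hleaf : ((leavesAt G u ∩ X) \ {v}).Subsingleton) (ha : a ∈ spokeEnds G X u v) (hat : a ≠ t) :
    ConflictFreeJoined G (cutColoring G X s(u, v)) a t := by
  by_cases ht : t ∈ spokeEnds G X u v
  · by_cases hal : a ∈ leavesAt G u
    · have htl : t ∉ leavesAt G u := fun htl =>
        hat (hleaf ⟨⟨hal, ha.1.2⟩, ha.2⟩ ⟨⟨htl, ht.1.2⟩, ht.2⟩)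
      obtain ⟨w, htw, hwu⟩ := exists_adj_ne_of_notMem_leavesAt ht.1.1.symm htl
      exact (conflictFreeJoined_of_mem_spokeEnds_of_adj h hu hv ht ha hat.symm htw hwu).symm
    · obtain ⟨w, haw, hwu⟩ := exists_adj_ne_of_notMem_leavesAt ha.1.1.symm hal
      exact conflictFreeJoined_of_mem_spokeEnds_of_adj h hu hv ha ht hat haw hwu
  · exact conflictFreeJoined_of_mem_spokeEnds_of_notMem h hu ha ht

lemma isCFCColoring_cutColoring_of_pairwise (h : IsDominatingEdge G u v) (hu : u ∉ X) (hv : v ∈ X)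
    (hleaf_u : ((leavesAt G u ∩ X) \ {v}).Subsingleton)
    (hleaf_v : ((leavesAt G v ∩ Xᶜ) \ {u}).Subsingleton)
    (hrest : (spokeEnds G X u v ∪ spokeEnds G Xᶜ v u)ᶜ.Pairwise
      (ConflictFreeJoined G (cutColoring G X s(u, v)))) :
    IsCFCColoring G (cutColoring G X s(u, v)) := by
  have joined_spoke {x y} (hxy : x ≠ y) (hx : x ∈ spokeEnds G X u v ∪ spokeEnds G Xᶜ v u) :
      ConflictFreeJoined G (cutColoring G X s(u, v)) x y := by
    rcases hx with hx | hx
    · exact conflictFreeJoined_of_mem_spokeEnds h hu hv hleaf_u hx hxy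
    · have := conflictFreeJoined_of_mem_spokeEnds h.symm (not_not.2 hv) hu hleaf_v hx hxy
      rwa [cutColoring_compl, Sym2.eq_swap] at this
  refine isCFCColoring_of_conflictFreeJoined fun x y hxy => ?_
  by_cases hx : x ∈ spokeEnds G X u v ∪ spokeEnds G Xᶜ v u
  · exact joined_spoke hxy hx
  by_cases hy : y ∈ spokeEnds G X u v ∪ spokeEnds G Xᶜ v u
  · exact (joined_spoke hxy.symm hy).symm
  · exact hrest hx hy hxy

theorem isCFCColoring_cutColoring_neighborSet (h : IsDominatingEdge G u v)
    (hu : (leavesAt G u \ {v}).Subsingleton) (hv : (leavesAt G v \ {u}).Subsingleton) :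
    IsCFCColoring G (cutColoring G (G.neighborSet u) s(u, v)) := by
  have hrest : (spokeEnds G (G.neighborSet u) u v ∪ spokeEnds G (G.neighborSet u)ᶜ v u)ᶜ ⊆
      {u, v} := fun x hx => by
    have := h.adj_or_adj x
    simp only [spokeEnds, Set.mem_compl_iff, Set.mem_union, Set.mem_sdiff, Set.mem_inter_iff,
      mem_neighborSet, Set.mem_insert_iff, Set.mem_singleton_iff] at hx ⊢
    tauto
  refine isCFCColoring_cutColoring_of_pairwise h (by simp) h.adj
    (hu.anti fun x hx => ⟨hx.1.1, hx.2⟩) (hv.anti fun x hx => ⟨hx.1.1, hx.2⟩) (.mono hrest ?_)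
  exact Set.pairwise_pair_of_symm.2 fun _ => conflictFreeJoined_of_adj h.adj

end Spokes

section Detour

variable {V : Type*} {G : SimpleGraph V} {X : Set V} {u v a b : V}

lemma IsDetour.pairwise_uniqueColorJoined (hd : IsDetour G u v a b) (huv : G.Adj u v)
    (hu : u ∉ X) (hv : v ∈ X) (ha : a ∈ X) (hb : b ∈ X) :
    ({u, v, b} : Set V).Pairwise (UniqueColorJoined G (cutColoring G X s(u, v)) 1) := by
  obtain ⟨hua, hab, hbv, hav, hbu⟩ := hd
  have hvu0 : cutColoring G X s(u, v) s(v, u) = 0 :=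
    (cutColoring_eq_zero_iff huv.symm).2 (.inr Sym2.eq_swap)
  have hua1 : cutColoring G X s(u, v) s(u, a) = 1 := (cutColoring_eq_one_iff hua).2 (by grind)
  have hab0 : cutColoring G X s(u, v) s(a, b) = 0 := (cutColoring_eq_zero_iff hab).2 (by grind)
  have hub : UniqueColorJoined G (cutColoring G X s(u, v)) 1 u b :=
    ⟨.cons hua (.cons hab .nil), by simp [hua.ne, hbu.symm, hab.ne], by simp [*]⟩
  rcases hbv with rfl | hvb
  · simpa [Set.pairwise_pair_of_symm] using fun _ => hub
  · have hbv0 : cutColoring G X s(u, v) s(b, v) = 0 :=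
      (cutColoring_eq_zero_iff hvb.symm).2 (by grind)
    have huv' : UniqueColorJoined G (cutColoring G X s(u, v)) 1 u v :=
      ⟨.cons hua (.cons hab (.cons hvb.symm .nil)),
        by simp [*, huv.ne, hua.ne, hab.ne, hvb.ne', hbu.symm], by simp [*]⟩
    have hvb' : UniqueColorJoined G (cutColoring G X s(u, v)) 1 v b :=
      ⟨.cons huv.symm (.cons hua (.cons hab .nil)),
        by simp [*, huv.ne', hua.ne, hab.ne, hvb.ne, hav.symm, hbu.symm], by simp [*]⟩
    simp [Set.pairwise_insert_of_symm, huv', hvb', hub]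

lemma IsDetour.isCFCColoring_cutColoring (hd : IsDetour G u v a b) (h : IsDominatingEdge G u v)
    (hu : u ∉ X) (hv : v ∈ X) (ha : a ∈ X) (hb : b ∈ X)
    (hu_mem : (leavesAt G u ∩ X).Subsingleton) (hu_compl : (leavesAt G u \ X).Subsingleton)
    (hv_mem : (leavesAt G v ∩ X).Subsingleton) (hv_compl : (leavesAt G v \ X).Subsingleton)
    (hrest : (spokeEnds G X u v ∪ spokeEnds G Xᶜ v u)ᶜ ⊆
      {u, v, b} ∪ (leavesAt G u \ X ∪ leavesAt G v ∩ X)) :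
    IsCFCColoring G (cutColoring G X s(u, v)) := by
  refine isCFCColoring_cutColoring_of_pairwise h hu hv (hu_mem.anti Set.sdiff_subset)
    (hv_compl.anti Set.sdiff_subset) (.mono hrest ?_)
  refine pairwise_conflictFreeJoined_union_leaves (hd.pairwise_uniqueColorJoined h.adj hu hv ha hb)
    (by simp) (by simp) h.adj.ne Set.sdiff_subset Set.inter_subset_left hu_compl hv_mem ?_ ?_
  · intro x hx
    simp [cutColoring_eq_one_iff (adj_of_mem_leavesAt hx.1), hu, hx.2]
  · intro x hx
    simp [cutColoring_eq_one_iff (adj_of_mem_leavesAt hx.1), hv, hx.2]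

/-- The cut set obtained from the neighborhood of `u` by moving the vertices of `L` out of it and
the vertices of `M` and the vertex `b` into it. With `L` consisting of leaves at `u` and `M` of
leaves at `v`, it makes a detour `u a b v` have colors `1 0 0`. -/
def detourCut (G : SimpleGraph V) (u b : V) (L M : Set V) : Set V :=
  insert b (G.neighborSet u \ L ∪ M)

lemma mem_detourCut_iff {L M : Set V} {x : V} :
    x ∈ detourCut G u b L M ↔ x = b ∨ G.Adj u x ∧ x ∉ L ∨ x ∈ M :=
  Iff.rfl

lemma compl_spokeEnds_detourCut_subset {L M : Set V} (h : IsDominatingEdge G u v)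
    (hL : L ⊆ leavesAt G u) (hM : M ⊆ leavesAt G v) :
    (spokeEnds G (detourCut G u b L M) u v ∪ spokeEnds G (detourCut G u b L M)ᶜ v u)ᶜ ⊆
      {u, v, b} ∪ (leavesAt G u \ detourCut G u b L M ∪ leavesAt G v ∩ detourCut G u b L M) := by
  intro x hx
  have hx_adj := h.adj_or_adj x
  simp only [spokeEnds, Set.mem_compl_iff, Set.mem_union, Set.mem_sdiff, Set.mem_inter_iff,
    mem_neighborSet, Set.mem_insert_iff, Set.mem_singleton_iff, mem_detourCut_iff] at hx ⊢
  grind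

theorem IsDetour.exists_isCFCColoring_cutColoring (hd : IsDetour G u v a b)
    (h : IsDominatingEdge G u v)
    (hu : (leavesAt G u).encard ≤ 2) (hv : (leavesAt G v).encard ≤ 2) :
    ∃ X, IsCFCColoring G (cutColoring G X s(u, v)) := by
  obtain ⟨L, hL, hLss, hLc⟩ := exists_subset_subsingleton_sdiff hu
  obtain ⟨M, hM, hMss, hMc⟩ := exists_subset_subsingleton_sdiff hv
  have ⟨hua, hab, hbv, hav, hbu⟩ := hd
  have huv := h.adj
  have adj_of_leaf_u {x} (hx : x ∈ leavesAt G u) : G.Adj u x := (adj_of_mem_leavesAt hx).symm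
  have not_adj_of_leaf_v {x} (hx : x ∈ leavesAt G v) : ¬ G.Adj u x := fun hux =>
    notMem_leavesAt_of_adj hux.symm huv.ne hx
  have hu_leaf : u ∉ leavesAt G v := notMem_leavesAt_of_adj hua hav
  have hv_leaf : v ∉ leavesAt G u := by
    rcases hbv with rfl | hvb
    · exact notMem_leavesAt_of_adj hab.symm hua.ne'
    · exact notMem_leavesAt_of_adj hvb hbu
  have ha_leaf : a ∉ leavesAt G u := notMem_leavesAt_of_adj hab hbu
  have hb_leaf_u : b ∉ leavesAt G u := notMem_leavesAt_of_adj hab.symm hua.ne'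
  have hb_leaf_v : b ∉ leavesAt G v := notMem_leavesAt_of_adj hab.symm hav
  have mem_X (x) : x ∈ detourCut G u b L M ↔ x = b ∨ G.Adj u x ∧ x ∉ L ∨ x ∈ M :=
    mem_detourCut_iff
  have hrest := compl_spokeEnds_detourCut_subset (b := b) h hL hM
  generalize detourCut G u b L M = X at mem_X hrest
  have huX : u ∉ X := by grind [G.irrefl]
  have hvX : v ∈ X := by grind
  have haX : a ∈ X := by grind
  have hbX : b ∈ X := by grind
  have hu_mem : leavesAt G u ∩ X ⊆ leavesAt G u \ L := by grind
  have hu_compl : leavesAt G u \ X ⊆ L := by grind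
  have hv_mem : leavesAt G v ∩ X ⊆ M := by grind
  have hv_compl : leavesAt G v \ X ⊆ leavesAt G v \ M := by grind
  exact ⟨X, hd.isCFCColoring_cutColoring h huX hvX haX hbX (hLc.anti hu_mem) (hLss.anti hu_compl)
    (hMss.anti hv_mem) (hMc.anti hv_compl) hrest⟩

end Detour

section Bridges

variable {V : Type*} {G : SimpleGraph V} {c : Sym2 V → ℕ} {k : ℕ} {u v a b : V}

lemma encard_setOf_isBridge_and_mem (G : SimpleGraph V) (v : V) :
    {e : Sym2 V | G.IsBridge e ∧ v ∈ e}.encard = {x | G.IsBridge s(v, x)}.encard := by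
  rw [← (Sym2.mkEmbedding v).injective.encard_image]
  congr 1
  ext e
  constructor
  · rintro ⟨he, x, rfl⟩
    exact ⟨x, he, rfl⟩
  · rintro ⟨x, hx, rfl⟩
    exact ⟨hx, Sym2.mem_mk_left v x⟩

theorem IsDominatingEdge.exists_isCFCColoring_cutColoring (h : IsDominatingEdge G u v)
    (hbridge : ∀ x, {y | G.IsBridge s(x, y)}.encard ≤ 2) :
    ∃ X, IsCFCColoring G (cutColoring G X s(u, v)) := by
  have hsub (x) : leavesAt G x ⊆ {y | G.IsBridge s(x, y)} := fun _ => isBridge_of_mem_leavesAt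
  by_cases huv : G.IsBridge s(u, v)
  · have hss {x y} (hxy : G.IsBridge s(x, y)) : (leavesAt G x \ {y}).Subsingleton :=
      (Set.encard_le_one_iff_subsingleton.1 (encard_sdiff_singleton_le_one (hbridge x) hxy)).anti
        (Set.sdiff_subset_sdiff_left (hsub x))
    exact ⟨_, isCFCColoring_cutColoring_neighborSet h (hss huv) (hss (Sym2.eq_swap ▸ huv))⟩
  · obtain ⟨a, b, hd⟩ := h.exists_isDetour huv
    have hle (x) : (leavesAt G x).encard ≤ 2 := (Set.encard_le_encard (hsub x)).trans (hbridge x)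
    exact hd.exists_isCFCColoring_cutColoring h (hle u) (hle v)

lemma IsCFCColoring.preconnected (hc : IsCFCColoring G c) : G.Preconnected := fun x y => by
  by_cases hxy : x = y
  · exact hxy ▸ .rfl
  · exact ⟨(hc x y hxy).choose.1⟩

lemma edges_eq_of_isBridge (ha : G.IsBridge s(v, a)) (hb : G.IsBridge s(v, b)) (hab : a ≠ b)
    (hvb : G.Adj v b) {p : G.Walk a b} (hp : p.IsPath) : p.edges = [s(a, v), s(v, b)] := by
  classical
  have hmem : s(v, a) ∈ p.edges := by
    have hcons := isBridge_iff_forall_walk_mem_edges.1 ha (.cons hvb p.reverse)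
    simpa [hab, hvb.ne] using hcons
  have hv : v ∈ p.support := p.fst_mem_support_of_mem_edges hmem
  have htake : s(a, v) ∈ (p.takeUntil v hv).edges :=
    isBridge_iff_forall_walk_mem_edges.1 (Sym2.eq_swap ▸ ha) _
  have hdrop : s(v, b) ∈ (p.dropUntil v hv).edges := isBridge_iff_forall_walk_mem_edges.1 hb _
  rw [← p.take_spec hv, Walk.edges_append, (hp.takeUntil hv).eq_adj_toWalk_of_mem_edges htake,
    (hp.dropUntil hv).eq_adj_toWalk_of_mem_edges hdrop]
  rfl

lemma IsCFCColoring.injOn_isBridge (hc : IsCFCColoring G c) (v : V) :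
    {x | G.IsBridge s(v, x)}.InjOn fun x => c s(v, x) := by
  intro a ha b hb hcab
  by_contra hab
  have hvb : G.Adj v b := hb.reachable_iff_adj.1 (hc.preconnected v b)
  obtain ⟨⟨p, hp⟩, e, he, huniq⟩ := hc a b hab
  have hne : s(v, a) ≠ s(v, b) := mt Sym2.congr_right.1 hab
  rw [edges_eq_of_isBridge ha hb hab hvb hp, Sym2.eq_swap] at he huniq
  grind

lemma IsCFCColoring.encard_isBridge_le (hc : IsCFCColoring G c) (hk : ∀ e ∈ G.edgeSet, c e < k)
    (v : V) : {x | G.IsBridge s(v, x)}.encard ≤ k := by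
  have hmaps : {x | G.IsBridge s(v, x)}.MapsTo (fun x => c s(v, x)) (Finset.range k) :=
    fun x hx => by simpa using hk _ (hx.reachable_iff_adj.1 (hc.preconnected v x))
  calc {x | G.IsBridge s(v, x)}.encard
      ≤ (Finset.range k : Set ℕ).encard :=
        Set.encard_le_encard_of_injOn hmaps (hc.injOn_isBridge v)
    _ = k := by rw [Set.encard_coe_eq_coe_finsetCard, Finset.card_range]

end Bridges

section CfcNum

variable {V : Type*} {G : SimpleGraph V} {c : Sym2 V → ℕ}

lemma IsCFCColoring.eq_top (hc : IsCFCColoring G c) (hk : ∀ e ∈ G.edgeSet, c e < 1) : G = ⊤ := by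
  rw [eq_top_iff]
  intro x y hxy
  obtain ⟨⟨p, hp⟩, e, he, huniq⟩ := hc x y hxy
  have hc0 {e} (he : e ∈ p.edges) : c e = 0 := Nat.lt_one_iff.1 (hk _ (p.edges_subset_edgeSet he))
  have hrep : p.edges = List.replicate p.edges.length e :=
    List.eq_replicate_of_mem fun e' he' => huniq e' he' (by rw [hc0 he, hc0 he'])
  have hle : p.edges.length ≤ 1 := List.nodup_replicate.1 (hrep ▸ hp.isTrail.edges_nodup)
  have hpos : 0 < p.edges.length := List.length_pos_of_mem he
  exact p.adj_of_length_eq_one (by rw [← p.length_edges]; lia)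

lemma exists_isCFCColoring_of_cfcNum_ne_zero (h : cfcNum G ≠ 0) :
    ∃ c : Sym2 V → ℕ, (∀ e ∈ G.edgeSet, c e < cfcNum G) ∧ IsCFCColoring G c :=
  Nat.sInf_mem (Nat.nonempty_of_pos_sInf (Nat.pos_of_ne_zero h))

lemma IsCFCColoring.cfcNum_eq_two (hc : IsCFCColoring G c) (hk : ∀ e ∈ G.edgeSet, c e < 2)
    (hne : G ≠ ⊤) : cfcNum G = 2 := by
  refine le_antisymm (Nat.sInf_le ⟨c, hk, hc⟩) (le_csInf ⟨2, c, hk, hc⟩ ?_)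
  rintro k ⟨c', hk', hc'⟩
  by_contra! hk2
  exact hne (hc'.eq_top fun e he => (hk' e he).trans_le (Nat.le_of_lt_succ hk2))

theorem cfcNum_eq_two_iff_cutEdges_general {u v : V} (huv : IsDominatingEdge G u v) (hne : G ≠ ⊤) :
    cfcNum G = 2 ↔ ∀ x : V, {e : Sym2 V | G.IsBridge e ∧ x ∈ e}.encard ≤ 2 := by
  simp only [encard_setOf_isBridge_and_mem]
  constructor
  · intro h2 x
    obtain ⟨c, hk, hc⟩ := exists_isCFCColoring_of_cfcNum_ne_zero (h2 ▸ two_ne_zero)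
    rw [h2] at hk
    exact hc.encard_isBridge_le hk x
  · intro hbridge
    obtain ⟨X, hX⟩ := huv.exists_isCFCColoring_cutColoring hbridge
    exact hX.cfcNum_eq_two (fun e _ => cutColoring_lt_two G X s(u, v) e) hne

end CfcNum

/-- For a connected noncomplete graph G whose complement is connected with diameter
at least 3: cfc(G) = 2 iff every vertex of G is incident with at most two cut-edges. -/
theorem cfcNum_eq_two_iff_cutEdges {V : Type*} [Fintype V] (G : SimpleGraph V)
    (hG : G.Connected) (hne : G ≠ ⊤) (hGc : Gᶜ.Connected) (hdiam : 3 ≤ Gᶜ.diam) :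
    cfcNum G = 2 ↔ ∀ v : V, {e : Sym2 V | G.IsBridge e ∧ v ∈ e}.ncard ≤ 2 := by
  obtain ⟨u, v, huv⟩ := exists_isDominatingEdge hdiam
  simpa only [← Nat.cast_ofNat (R := ℕ∞), Set.encard_le_coe_iff_finite_ncard_le, Set.toFinite,
    true_and] using cfcNum_eq_two_iff_cutEdges_general huv hne
end
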